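/- arXiv:1305.6420 — 8 statements merged into one kernel-verified Lean document; each statement's English description precedes it below -/
import Mathlib

section
/- Let {X_i}_{i∈I} and {Y_j}_{j∈J} be families of Banach spaces over ℝ, let X = [⊕_{i∈I} X_i]_{ℓ1} be the ℓ1-sum of {X_i} and let Y = [⊕_{j∈J} Y_j]_{ℓ∞} be the ℓ∞-sum of {Y_j}. If the pair (X,Y) has the Bishop–Phelps–Bollobás property with a function η : (0,1) → (0,∞), then for every i ∈ I and every j ∈ J the pair (X_i, Y_j) also has the Bishop–Phelps–Bollobás property with the same function η. -/
open scoped ENNReal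

/-- A pair `(X, Y)` of normed spaces has the Bishop–Phelps–Bollobás property with the
function `η : (0,1) → (0,∞)` (encoded as `η : ℝ → ℝ`, relevant only on `(0,1)`). -/
def BPBpWith (X Y : Type*) [NormedAddCommGroup X] [NormedSpace ℝ X]
    [NormedAddCommGroup Y] [NormedSpace ℝ Y] (η : ℝ → ℝ) : Prop :=
  ∀ ε ∈ Set.Ioo (0 : ℝ) 1, ∀ (T₀ : X →L[ℝ] Y) (x₀ : X),
    ‖T₀‖ = 1 → ‖x₀‖ = 1 → 1 - η ε < ‖T₀ x₀‖ →
      ∃ (S : X →L[ℝ] Y) (x : X),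
        ‖x‖ = 1 ∧ ‖S‖ = 1 ∧ ‖S x‖ = 1 ∧ ‖x - x₀‖ < ε ∧ ‖S - T₀‖ < ε

/-!
The space `X i` is an L-summand of the `ℓ¹`-sum and `Y j` is an M-summand of the `ℓ^∞`-sum, and the
property passes to both kinds of summand: extend an operator by zero off the summand, apply the
property of the big pair, and compress. The perturbed operator `S` is at distance `< 1` from the
extension, so on the complement of the L-summand it is a strict contraction and its values have
components of norm `< 1` off the M-summand. Hence a unit vector `x` at which `S` attains its norm
lies in the L-summand, and the M-summand component of `S x` has norm one.
-/

section Summands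

variable {𝕜 E X G : Type*} [NontriviallyNormedField 𝕜]
  [SeminormedAddCommGroup E] [NormedSpace 𝕜 E] [SeminormedAddCommGroup X] [NormedSpace 𝕜 X]
  [SeminormedAddCommGroup G] [NormedSpace 𝕜 G] {ι : E →L[𝕜] X} {π : X →L[𝕜] E}

theorem norm_eq_one_of_norm_apply_eq_one {S : X →L[𝕜] G} {x : X} (hS : ‖S‖ ≤ 1) (hx : ‖x‖ ≤ 1)
    (hSx : ‖S x‖ = 1) : ‖S‖ = 1 :=
  hS.antisymm (hSx ▸ S.unit_le_opNorm x hx)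

/-- `E` is an L-summand of `X` with inclusion `ι` and projection `π`, that is, `X` is the `ℓ¹`-sum
of `E` and `ker π`. Equivalently, `ι` is an isometry, `π ∘ ι = id` and `ι ∘ π` is an L-projection
in the sense of `IsLprojection`; the maps are kept explicit so that `E` need not be a subspace. -/
structure IsLSummand (ι : E →L[𝕜] X) (π : X →L[𝕜] E) : Prop where
  leftInverse : Function.LeftInverse π ι
  norm_eq_add : ∀ x, ‖x‖ = ‖π x‖ + ‖x - ι (π x)‖

/-- `E` is an M-summand of `X` with inclusion `ι` and projection `π`, that is, `X` is the
`ℓ^∞`-sum of `E` and `ker π`. Compare `IsLSummand` and `IsMprojection`. -/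
structure IsMSummand (ι : E →L[𝕜] X) (π : X →L[𝕜] E) : Prop where
  leftInverse : Function.LeftInverse π ι
  norm_eq_max : ∀ x, ‖x‖ = max ‖π x‖ ‖x - ι (π x)‖

namespace IsLSummand

theorem norm_inclusion_apply (h : IsLSummand ι π) (e : E) : ‖ι e‖ = ‖e‖ := by
  simpa only [h.leftInverse e, sub_self, norm_zero, add_zero] using h.norm_eq_add (ι e)

theorem norm_projection_apply_le (h : IsLSummand ι π) (x : X) : ‖π x‖ ≤ ‖x‖ :=
  (le_add_of_nonneg_right (norm_nonneg _)).trans_eq (h.norm_eq_add x).symm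

theorem norm_comp_inclusion_le (h : IsLSummand ι π) (S : X →L[𝕜] G) : ‖S ∘L ι‖ ≤ ‖S‖ :=
  (S ∘L ι).opNorm_le_bound (norm_nonneg S) fun e ↦
    S.le_opNorm_of_le (h.norm_inclusion_apply e).le

theorem comp_projection_comp_inclusion (h : IsLSummand ι π) (T : E →L[𝕜] G) :
    (T ∘L π) ∘L ι = T :=
  ContinuousLinearMap.ext fun e ↦ congrArg T (h.leftInverse e)

theorem norm_comp_projection (h : IsLSummand ι π) (T : E →L[𝕜] G) : ‖T ∘L π‖ = ‖T‖ := by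
  refine le_antisymm ?_ ?_
  · exact (T ∘L π).opNorm_le_bound (norm_nonneg T) fun x ↦
      T.le_opNorm_of_le (h.norm_projection_apply_le x)
  · simpa only [h.comp_projection_comp_inclusion] using h.norm_comp_inclusion_le (T ∘L π)

theorem norm_comp_inclusion_sub_le (h : IsLSummand ι π) (S : X →L[𝕜] G) (T : E →L[𝕜] G) :
    ‖S ∘L ι - T‖ ≤ ‖S - T ∘L π‖ := by
  simpa only [ContinuousLinearMap.sub_comp, h.comp_projection_comp_inclusion] using
    h.norm_comp_inclusion_le (S - T ∘L π)

end IsLSummand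

theorem IsLSummand.inclusion_projection_eq_of_norm_apply_eq {X : Type*} [NormedAddCommGroup X]
    [NormedSpace 𝕜 X] {ι : E →L[𝕜] X} {π : X →L[𝕜] E} (h : IsLSummand ι π) {S : X →L[𝕜] G}
    {T : E →L[𝕜] G} {x : X} (hS : ‖S‖ ≤ 1) (hST : ‖S - T ∘L π‖ < 1) (hx : ‖S x‖ = ‖x‖) :
    ι (π x) = x := by
  set z := x - ι (π x) with hz
  have hπz : π z = 0 := by rw [hz, map_sub, h.leftInverse, sub_self]
  have hSz : ‖S z‖ ≤ ‖S - T ∘L π‖ * ‖z‖ := by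
    simpa [hπz] using (S - T ∘L π).le_opNorm z
  have hSπ : ‖S (ι (π x))‖ ≤ ‖π x‖ := by
    simpa only [one_mul, h.norm_inclusion_apply] using S.le_of_opNorm_le hS (ι (π x))
  have hsum : ‖π x‖ + ‖z‖ ≤ ‖π x‖ + ‖S - T ∘L π‖ * ‖z‖ := calc
    ‖π x‖ + ‖z‖ = ‖S (ι (π x) + z)‖ := by rw [← h.norm_eq_add, ← hx, hz, add_sub_cancel]
    _ ≤ ‖S (ι (π x))‖ + ‖S z‖ := by rw [map_add]; exact norm_add_le _ _
    _ ≤ ‖π x‖ + ‖S - T ∘L π‖ * ‖z‖ := add_le_add hSπ hSz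
  have hz_zero : z = 0 := by
    by_contra hne
    exact (mul_lt_of_lt_one_left (norm_pos_iff.mpr hne) hST).not_ge (le_of_add_le_add_left hsum)
  exact (sub_eq_zero.mp hz_zero).symm

namespace IsMSummand

theorem norm_projection_apply_le (h : IsMSummand ι π) (x : X) : ‖π x‖ ≤ ‖x‖ :=
  (le_max_left _ _).trans_eq (h.norm_eq_max x).symm

theorem norm_sub_inclusion_projection_le (h : IsMSummand ι π) (x : X) : ‖x - ι (π x)‖ ≤ ‖x‖ :=
  (le_max_right _ _).trans_eq (h.norm_eq_max x).symm

theorem norm_inclusion_apply (h : IsMSummand ι π) (e : E) : ‖ι e‖ = ‖e‖ := by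
  simpa only [h.leftInverse e, sub_self, norm_zero, max_eq_left (norm_nonneg e)] using
    h.norm_eq_max (ι e)

theorem norm_projection_comp_le (h : IsMSummand ι π) (S : G →L[𝕜] X) : ‖π ∘L S‖ ≤ ‖S‖ :=
  (π ∘L S).opNorm_le_bound (norm_nonneg S) fun g ↦
    (h.norm_projection_apply_le (S g)).trans (S.le_opNorm g)

theorem norm_inclusion_comp (h : IsMSummand ι π) (T : G →L[𝕜] E) : ‖ι ∘L T‖ = ‖T‖ :=
  ContinuousLinearMap.opNorm_ext _ _ fun g ↦ h.norm_inclusion_apply (T g)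

theorem norm_projection_comp_sub_le (h : IsMSummand ι π) (S : G →L[𝕜] X) (T : G →L[𝕜] E) :
    ‖π ∘L S - T‖ ≤ ‖S - ι ∘L T‖ := by
  have hT : π ∘L (ι ∘L T) = T := ContinuousLinearMap.ext fun g ↦ h.leftInverse (T g)
  simpa only [ContinuousLinearMap.comp_sub, hT] using h.norm_projection_comp_le (S - ι ∘L T)

theorem norm_projection_apply_eq_of_norm_sub_lt (h : IsMSummand ι π) {x : X} {e : E}
    (hxe : ‖x - ι e‖ < ‖x‖) : ‖π x‖ = ‖x‖ := by
  have hcompl : x - ι e - ι (π (x - ι e)) = x - ι (π x) := by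
    rw [map_sub π, h.leftInverse, map_sub, sub_sub_sub_cancel_right]
  have hlt : ‖x - ι (π x)‖ < ‖x‖ :=
    (hcompl ▸ h.norm_sub_inclusion_projection_le (x - ι e)).trans_lt hxe
  rcases max_choice ‖π x‖ ‖x - ι (π x)‖ with hmax | hmax
  · exact ((h.norm_eq_max x).trans hmax).symm
  · exact absurd ((h.norm_eq_max x).trans hmax) hlt.ne'

end IsMSummand

end Summands

section LpSums

variable {𝕜 α : Type*} [NontriviallyNormedField 𝕜] {E : α → Type*}
  [∀ a, NormedAddCommGroup (E a)] [∀ a, NormedSpace 𝕜 (E a)] [DecidableEq α]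

theorem isLSummand_lp_one (a : α) :
    IsLSummand (lp.singleContinuousLinearMap 𝕜 E 1 a) (lp.evalCLM 𝕜 E 1 a) where
  leftInverse := lp.single_apply_self 1 a
  norm_eq_add f := by
    change ‖f‖ = ‖f a‖ + ‖f - lp.single 1 a (f a)‖
    have hcompl := lp.norm_compl_sum_single (p := 1) (by simp) f {a}
    simp only [ENNReal.toReal_one, Real.rpow_one, Finset.sum_singleton] at hcompl
    rw [hcompl, add_sub_cancel]

theorem isMSummand_lp_top (a : α) :
    IsMSummand (lp.singleContinuousLinearMap 𝕜 E ∞ a) (lp.evalCLM 𝕜 E ∞ a) where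
  leftInverse := lp.single_apply_self ∞ a
  norm_eq_max f := by
    change ‖f‖ = max ‖f a‖ ‖f - lp.single ∞ a (f a)‖
    have hself : (f - lp.single ∞ a (f a)) a = 0 := by
      rw [lp.coeFn_sub, Pi.sub_apply, lp.single_apply_self, sub_self]
    have hne {b : α} (hb : b ≠ a) : (f - lp.single ∞ a (f a)) b = f b := by
      rw [lp.coeFn_sub, Pi.sub_apply, lp.single_apply_ne _ _ _ hb, sub_zero]
    have heval (g : lp E ∞) (b : α) : ‖g b‖ ≤ ‖g‖ := lp.norm_apply_le_norm ENNReal.top_ne_zero g b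
    refine le_antisymm ?_ (max_le (heval f a) ?_)
    · refine lp.norm_le_of_forall_le (by positivity) fun b ↦ ?_
      rcases eq_or_ne b a with rfl | hb
      · exact le_max_left _ _
      · exact le_max_of_le_right (hne hb ▸ heval _ b)
    · refine lp.norm_le_of_forall_le (norm_nonneg f) fun b ↦ ?_
      rcases eq_or_ne b a with rfl | hb
      · rw [hself, norm_zero]
        exact norm_nonneg f
      · exact hne hb ▸ heval f b

end LpSums

section BishopPhelpsBollobas

variable {E X F Y : Type*} [NormedAddCommGroup E] [NormedSpace ℝ E]
  [NormedAddCommGroup X] [NormedSpace ℝ X] [NormedAddCommGroup F] [NormedSpace ℝ F]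
  [NormedAddCommGroup Y] [NormedSpace ℝ Y] {η : ℝ → ℝ}

theorem BPBpWith.of_isLSummand {ι : E →L[ℝ] X} {π : X →L[ℝ] E} (hXY : BPBpWith X Y η)
    (h : IsLSummand ι π) : BPBpWith E Y η := by
  intro ε hε T₀ e₀ hT₀ he₀ hη
  obtain ⟨S, x, hx, hS, hSx, hxe₀, hST₀⟩ := hXY ε hε (T₀ ∘L π) (ι e₀)
    (by rw [h.norm_comp_projection, hT₀]) (by rw [h.norm_inclusion_apply, he₀])
    (by rwa [ContinuousLinearMap.comp_apply, h.leftInverse])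
  have hιπx : ι (π x) = x :=
    h.inclusion_projection_eq_of_norm_apply_eq hS.le (hST₀.trans hε.2) (hSx.trans hx.symm)
  have hπx : ‖π x‖ = 1 := by rw [← h.norm_inclusion_apply, hιπx, hx]
  have hSιx : ‖(S ∘L ι) (π x)‖ = 1 := by rw [ContinuousLinearMap.comp_apply, hιπx, hSx]
  have hclose : ‖π x - e₀‖ ≤ ‖x - ι e₀‖ := by
    simpa only [map_sub, h.leftInverse e₀] using h.norm_projection_apply_le (x - ι e₀)
  exact ⟨S ∘L ι, π x, hπx,
    norm_eq_one_of_norm_apply_eq_one ((h.norm_comp_inclusion_le S).trans_eq hS) hπx.le hSιx, hSιx,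
    hclose.trans_lt hxe₀, (h.norm_comp_inclusion_sub_le S T₀).trans_lt hST₀⟩

theorem BPBpWith.of_isMSummand {ι : F →L[ℝ] Y} {π : Y →L[ℝ] F} (hXY : BPBpWith X Y η)
    (h : IsMSummand ι π) : BPBpWith X F η := by
  intro ε hε T₀ x₀ hT₀ hx₀ hη
  obtain ⟨S, x, hx, hS, hSx, hxx₀, hST₀⟩ := hXY ε hε (ι ∘L T₀) x₀
    (by rw [h.norm_inclusion_comp, hT₀]) hx₀
    (by rwa [ContinuousLinearMap.comp_apply, h.norm_inclusion_apply])
  have hnear : ‖S x - ι (T₀ x)‖ < ‖S x‖ := calc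
    ‖S x - ι (T₀ x)‖ ≤ ‖S - ι ∘L T₀‖ := (S - ι ∘L T₀).unit_le_opNorm x hx.le
    _ < ‖S x‖ := by rw [hSx]; exact hST₀.trans hε.2
  have hπSx : ‖(π ∘L S) x‖ = 1 := (h.norm_projection_apply_eq_of_norm_sub_lt hnear).trans hSx
  exact ⟨π ∘L S, x, hx,
    norm_eq_one_of_norm_apply_eq_one ((h.norm_projection_comp_le S).trans_eq hS) hx.le hπSx, hπSx,
    hxx₀, (h.norm_projection_comp_sub_le S T₀).trans_lt hST₀⟩

theorem bpbp_of_l1_sum_domain_linfty_sum_range_general {ιE : E →L[ℝ] X} {πE : X →L[ℝ] E}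
    {ιF : F →L[ℝ] Y} {πF : Y →L[ℝ] F} (hE : IsLSummand ιE πE) (hF : IsMSummand ιF πF)
    (hXY : BPBpWith X Y η) : BPBpWith E F η :=
  (hXY.of_isMSummand hF).of_isLSummand hE

end BishopPhelpsBollobas

/-- If the pair `([⊕ᵢ Xᵢ]_{ℓ₁}, [⊕ⱼ Yⱼ]_{ℓ∞})` has the BPBp with a function `η`, then every
pair `(Xᵢ, Yⱼ)` has the BPBp with the same function `η`. -/
theorem bpbp_of_l1_sum_domain_linfty_sum_range
    {I J : Type*} (X : I → Type*) (Y : J → Type*)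
    [∀ i, NormedAddCommGroup (X i)] [∀ i, NormedSpace ℝ (X i)] [∀ i, CompleteSpace (X i)]
    [∀ j, NormedAddCommGroup (Y j)] [∀ j, NormedSpace ℝ (Y j)] [∀ j, CompleteSpace (Y j)]
    (η : ℝ → ℝ) (hη : ∀ ε ∈ Set.Ioo (0 : ℝ) 1, 0 < η ε)
    (h : BPBpWith (lp (fun i => X i) 1) (lp (fun j => Y j) ∞) η) :
    ∀ (i : I) (j : J), BPBpWith (X i) (Y j) η := by
  classical
  exact fun i j ↦ bpbp_of_l1_sum_domain_linfty_sum_range_general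
    (isLSummand_lp_one i) (isMSummand_lp_top j) h
end

section
/- Let X be a Banach space over ℝ and let {Y_j}_{j∈J} be a family of Banach spaces over ℝ. Then the pair (X, [⊕_{j∈J} Y_j]_{ℓ∞}) has the Bishop–Phelps–Bollobás property if and only if there exists a function η : (0,1) → (0,∞) such that for every j ∈ J the pair (X, Y_j) has the Bishop–Phelps–Bollobás property with the (common) function η. -/
open scoped ENNReal

/-- The pair `(X, Y)` has the Bishop–Phelps–Bollobás property. -/
def HasBPBp (X Y : Type*) [NormedAddCommGroup X] [NormedSpace ℝ X]
    [NormedAddCommGroup Y] [NormedSpace ℝ Y] : Prop :=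
  ∃ η : ℝ → ℝ, (∀ ε ∈ Set.Ioo (0 : ℝ) 1, 0 < η ε) ∧ BPBpWith X Y η

/-!
A coordinate space embeds isometrically in the `ℓ∞`-sum. If `S` attains its norm at `x` and lies
within `ε < 1` of an operator with range in the `j`-th coordinate, then all other coordinates of
`S x` have norm less than `ε`, so `S x` has full norm in the `j`-th one, and the `j`-th coordinate
of `S` attains its norm at `x` too. Conversely, if `T₀ x₀` is almost of full norm, then so is one
of its coordinates; replacing only that coordinate of `T₀` by a norm-attaining operator close to it
moves `T₀` by as much as the coordinate is moved. That coordinate is a contraction, but possibly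
of norm less than `1`: normalizing it costs half of `ε`.
-/

section LpCoordinates

variable {J 𝕜 : Type*} {Y : J → Type*} [∀ j, NormedAddCommGroup (Y j)]

theorem exists_lt_norm_apply_of_lt_norm {f : lp Y ∞} {c : ℝ} (hc : 0 ≤ c) (hf : c < ‖f‖) :
    ∃ j, c < ‖f j‖ := by
  by_contra! h
  exact hf.not_ge (lp.norm_le_of_forall_le hc h)

theorem norm_apply_eq_norm_of_norm_sub_single_lt [DecidableEq J] {f : lp Y ∞} {j : J} {a : Y j}
    (h : ‖f - lp.single ∞ j a‖ < ‖f‖) : ‖f j‖ = ‖f‖ := by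
  have hmax : ‖f‖ ≤ max ‖f j‖ ‖f - lp.single ∞ j a‖ := by
    refine lp.norm_le_of_forall_le (le_max_of_le_left (norm_nonneg _)) fun i => ?_
    obtain rfl | hij := eq_or_ne i j
    · exact le_max_left _ _
    · have hfi : (f - lp.single ∞ j a) i = f i := by
        rw [lp.coeFn_sub, Pi.sub_apply, lp.single_apply_ne _ _ _ hij, sub_zero]
      exact le_max_of_le_right (hfi ▸ lp.norm_apply_le_norm ENNReal.top_ne_zero _ i)
  exact (lp.norm_apply_le_norm ENNReal.top_ne_zero f j).antisymm
    ((le_max_iff.1 hmax).resolve_right h.not_ge)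

variable [NontriviallyNormedField 𝕜] [∀ j, NormedSpace 𝕜 (Y j)]
  {X : Type*} [SeminormedAddCommGroup X] [NormedSpace 𝕜 X] {p : ℝ≥0∞} [Fact (1 ≤ p)]

theorem norm_evalCLM_comp_le (T : X →L[𝕜] lp Y p) (j : J) :
    ‖lp.evalCLM 𝕜 Y p j ∘L T‖ ≤ ‖T‖ :=
  ContinuousLinearMap.opNorm_le_bound _ (norm_nonneg _) fun x =>
    (lp.norm_apply_le_norm (zero_lt_one.trans_le Fact.out).ne' (T x) j).trans (T.le_opNorm x)

variable [DecidableEq J]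

theorem evalCLM_comp_singleContinuousLinearMap (j : J) :
    lp.evalCLM 𝕜 Y p j ∘L lp.singleContinuousLinearMap 𝕜 Y p j = .id 𝕜 (Y j) :=
  ContinuousLinearMap.ext fun a => lp.single_apply_self p j a

theorem norm_singleContinuousLinearMap_comp (j : J) (T : X →L[𝕜] Y j) :
    ‖lp.singleContinuousLinearMap 𝕜 Y p j ∘L T‖ = ‖T‖ :=
  ContinuousLinearMap.opNorm_ext _ _ fun x =>
    lp.norm_single (zero_lt_one.trans_le Fact.out) j (T x)

/-- The operator obtained from an operator `T` into an `ℓᵖ`-sum by replacing its `j`-th coordinate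
with `R`. It is written as a perturbation of `T` supported on one coordinate, so that its
distance to `T` can be read off. -/
noncomputable def updateCoord (T : X →L[𝕜] lp Y p) (j : J) (R : X →L[𝕜] Y j) : X →L[𝕜] lp Y p :=
  T + lp.singleContinuousLinearMap 𝕜 Y p j ∘L (R - lp.evalCLM 𝕜 Y p j ∘L T)

theorem updateCoord_apply_self (T : X →L[𝕜] lp Y p) (j : J) (R : X →L[𝕜] Y j) (x : X) :
    updateCoord T j R x j = R x := by
  change T x j + lp.single p j (R x - T x j) j = R x
  rw [lp.single_apply_self, add_sub_cancel]

theorem updateCoord_apply_of_ne (T : X →L[𝕜] lp Y p) {i j : J} (hij : i ≠ j) (R : X →L[𝕜] Y j)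
    (x : X) : updateCoord T j R x i = T x i := by
  change T x i + lp.single p j (R x - T x j) i = T x i
  rw [lp.single_apply_ne _ _ _ hij, add_zero]

theorem norm_updateCoord_sub (T : X →L[𝕜] lp Y p) (j : J) (R : X →L[𝕜] Y j) :
    ‖updateCoord T j R - T‖ = ‖R - lp.evalCLM 𝕜 Y p j ∘L T‖ := by
  rw [updateCoord, add_sub_cancel_left, norm_singleContinuousLinearMap_comp]

theorem norm_updateCoord_le (T : X →L[𝕜] lp Y ∞) (j : J) (R : X →L[𝕜] Y j) :
    ‖updateCoord T j R‖ ≤ max ‖T‖ ‖R‖ := by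
  refine ContinuousLinearMap.opNorm_le_bound _ (le_max_of_le_left (norm_nonneg _)) fun x =>
    lp.norm_le_of_forall_le (by positivity) fun i => ?_
  obtain rfl | hij := eq_or_ne i j
  · rw [updateCoord_apply_self]
    exact R.le_of_opNorm_le (le_max_right _ _) x
  · rw [updateCoord_apply_of_ne T hij]
    exact (lp.norm_apply_le_norm ENNReal.top_ne_zero _ i).trans
      (T.le_of_opNorm_le (le_max_left _ _) x)

end LpCoordinates

theorem norm_normalize_sub_self {V : Type*} [NormedAddCommGroup V] [NormedSpace ℝ V] {v : V}
    (hv : v ≠ 0) : ‖NormedSpace.normalize v - v‖ = |1 - ‖v‖| := by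
  have hsmul : NormedSpace.normalize v - v = (1 - ‖v‖) • NormedSpace.normalize v := by
    rw [sub_smul, one_smul, NormedSpace.norm_smul_normalize]
  rw [hsmul, norm_smul, NormedSpace.norm_normalize hv, mul_one, Real.norm_eq_abs]

section BishopPhelpsBollobas

variable {X : Type*} [NormedAddCommGroup X] [NormedSpace ℝ X] {η : ℝ → ℝ}

theorem BPBpWith.exists_of_opNorm_le_one {Z : Type*} [NormedAddCommGroup Z] [NormedSpace ℝ Z]
    (h : BPBpWith X Z η) {ε : ℝ} (hε : ε ∈ Set.Ioo (0 : ℝ) 1) {T : X →L[ℝ] Z} (hT : ‖T‖ ≤ 1)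
    {x₀ : X} (hx₀ : ‖x₀‖ = 1) (hTx₀ : 1 - min (η (ε / 2)) (ε / 2) < ‖T x₀‖) :
    ∃ (S : X →L[ℝ] Z) (x : X),
      ‖x‖ = 1 ∧ ‖S‖ = 1 ∧ ‖S x‖ = 1 ∧ ‖x - x₀‖ < ε ∧ ‖S - T‖ < ε := by
  obtain ⟨hε0, hε1⟩ := hε
  have hη : 1 - η (ε / 2) < ‖T x₀‖ := by linarith [min_le_left (η (ε / 2)) (ε / 2)]
  have hnorm : 1 - ε / 2 < ‖T‖ := by
    linarith [min_le_right (η (ε / 2)) (ε / 2), T.unit_le_opNorm x₀ hx₀.le]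
  have hT0 : T ≠ 0 := norm_pos_iff.1 (by linarith)
  have hle : ‖T x₀‖ ≤ ‖NormedSpace.normalize T x₀‖ := by
    change ‖T x₀‖ ≤ ‖‖T‖⁻¹ • T x₀‖
    rw [norm_smul, norm_inv, norm_norm]
    exact le_mul_of_one_le_left (norm_nonneg _) ((one_le_inv₀ (norm_pos_iff.2 hT0)).2 hT)
  have hdist : ‖NormedSpace.normalize T - T‖ < ε / 2 := by
    rw [norm_normalize_sub_self hT0, abs_of_nonneg (sub_nonneg.2 hT)]
    linarith
  obtain ⟨S, x, hx, hS, hSx, hxx₀, hST⟩ := h (ε / 2) ⟨by linarith, by linarith⟩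
    (NormedSpace.normalize T) x₀ (NormedSpace.norm_normalize hT0) hx₀ (hη.trans_le hle)
  refine ⟨S, x, hx, hS, hSx, by linarith, ?_⟩
  linarith [norm_sub_le_norm_sub_add_norm_sub S (NormedSpace.normalize T) T]

variable {J : Type*} {Y : J → Type*} [∀ j, NormedAddCommGroup (Y j)] [∀ j, NormedSpace ℝ (Y j)]

theorem BPBpWith.of_lp_infty (h : BPBpWith X (lp Y ∞) η) (j : J) : BPBpWith X (Y j) η := by
  classical
  intro ε hε T₀ x₀ hT₀ hx₀ hT₀x₀
  let ι : Y j →L[ℝ] lp Y ∞ := lp.singleContinuousLinearMap ℝ Y ∞ j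
  let π : lp Y ∞ →L[ℝ] Y j := lp.evalCLM ℝ Y ∞ j
  have hιT₀ : ‖ι ∘L T₀‖ = 1 := (norm_singleContinuousLinearMap_comp j T₀).trans hT₀
  have hιT₀x₀ : ‖(ι ∘L T₀) x₀‖ = ‖T₀ x₀‖ := lp.norm_single ENNReal.zero_lt_top j (T₀ x₀)
  obtain ⟨S, x, hx, hS, hSx, hxx₀, hST₀⟩ := h ε hε (ι ∘L T₀) x₀ hιT₀ hx₀ (hιT₀x₀ ▸ hT₀x₀)
  have hnear : ‖S x - lp.single ∞ j (T₀ x)‖ < ‖S x‖ :=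
    calc ‖S x - lp.single ∞ j (T₀ x)‖ ≤ ‖S - ι ∘L T₀‖ :=
          (S - ι ∘L T₀).unit_le_opNorm x hx.le
      _ < 1 := hST₀.trans hε.2
      _ = ‖S x‖ := hSx.symm
  have hπSx : ‖(π ∘L S) x‖ = 1 := (norm_apply_eq_norm_of_norm_sub_single_lt hnear).trans hSx
  have hπS : ‖π ∘L S‖ = 1 :=
    (hS ▸ norm_evalCLM_comp_le S j).antisymm (hπSx ▸ (π ∘L S).unit_le_opNorm x hx.le)
  have hπ_sub : π ∘L S - T₀ = π ∘L (S - ι ∘L T₀) := by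
    rw [ContinuousLinearMap.comp_sub, ← ContinuousLinearMap.comp_assoc,
      evalCLM_comp_singleContinuousLinearMap, ContinuousLinearMap.id_comp]
  exact ⟨π ∘L S, x, hx, hπS, hπSx, hxx₀, hπ_sub ▸ (norm_evalCLM_comp_le _ j).trans_lt hST₀⟩

theorem BPBpWith.lp_infty (h : ∀ j, BPBpWith X (Y j) η) :
    BPBpWith X (lp Y ∞) fun ε => min (η (ε / 2)) (ε / 2) := by
  classical
  intro ε hε T₀ x₀ hT₀ hx₀ hT₀x₀
  have hthreshold : 0 ≤ 1 - min (η (ε / 2)) (ε / 2) := by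
    linarith [min_le_right (η (ε / 2)) (ε / 2), hε.1, hε.2]
  obtain ⟨j, hj⟩ := exists_lt_norm_apply_of_lt_norm hthreshold hT₀x₀
  obtain ⟨R, x, hx, hR, hRx, hxx₀, hRT₀⟩ := (h j).exists_of_opNorm_le_one hε
    (T := lp.evalCLM ℝ Y ∞ j ∘L T₀) (hT₀ ▸ norm_evalCLM_comp_le T₀ j) hx₀ hj
  let S := updateCoord T₀ j R
  have hS_le : ‖S‖ ≤ 1 := by simpa only [hT₀, hR, max_self] using norm_updateCoord_le T₀ j R
  have hle_Sx : 1 ≤ ‖S x‖ :=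
    calc 1 = ‖S x j‖ := by rw [updateCoord_apply_self, hRx]
      _ ≤ ‖S x‖ := lp.norm_apply_le_norm ENNReal.top_ne_zero _ j
  have hSx_le : ‖S x‖ ≤ ‖S‖ := S.unit_le_opNorm x hx.le
  exact ⟨S, x, hx, hS_le.antisymm (hle_Sx.trans hSx_le), (hSx_le.trans hS_le).antisymm hle_Sx,
    hxx₀, (norm_updateCoord_sub T₀ j R).trans_lt hRT₀⟩

end BishopPhelpsBollobas

theorem hasBPBp_linfty_sum_range_iff_general
    {J : Type*} (X : Type*) (Y : J → Type*)
    [NormedAddCommGroup X] [NormedSpace ℝ X]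
    [∀ j, NormedAddCommGroup (Y j)] [∀ j, NormedSpace ℝ (Y j)] :
    HasBPBp X (lp (fun j => Y j) ∞) ↔
      ∃ η : ℝ → ℝ, (∀ ε ∈ Set.Ioo (0 : ℝ) 1, 0 < η ε) ∧ ∀ j : J, BPBpWith X (Y j) η := by
  constructor
  · rintro ⟨η, hη, h⟩
    exact ⟨η, hη, h.of_lp_infty⟩
  · rintro ⟨η, hη, h⟩
    exact ⟨_, fun ε ⟨hε0, hε1⟩ => lt_min (hη _ ⟨half_pos hε0, by linarith⟩) (half_pos hε0),
      BPBpWith.lp_infty h⟩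

/-- The pair `(X, [⊕ⱼ Yⱼ]_{ℓ∞})` has the BPBp if and only if the pairs `(X, Yⱼ)` have the
BPBp with a common function `η`. -/
theorem hasBPBp_linfty_sum_range_iff
    {J : Type*} (X : Type*) (Y : J → Type*)
    [NormedAddCommGroup X] [NormedSpace ℝ X] [CompleteSpace X]
    [∀ j, NormedAddCommGroup (Y j)] [∀ j, NormedSpace ℝ (Y j)] [∀ j, CompleteSpace (Y j)] :
    HasBPBp X (lp (fun j => Y j) ∞) ↔
      ∃ η : ℝ → ℝ, (∀ ε ∈ Set.Ioo (0 : ℝ) 1, 0 < η ε) ∧ ∀ j : J, BPBpWith X (Y j) η :=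
  hasBPBp_linfty_sum_range_iff_general X Y
end

section
/- Let {X_i}_{i∈I} be a family of Banach spaces over ℝ, let X = [⊕_{i∈I} X_i]_{ℓ∞} be their ℓ∞-sum, and let Y be a Banach space over ℝ. If the pair (X,Y) has the Bishop–Phelps–Bollobás property with a function η : (0,1) → (0,∞), then for every i ∈ I the pair (X_i, Y) also has the Bishop–Phelps–Bollobás property with the same function η. -/
open scoped ENNReal

/-!
Extend `T₀` by composing it with the projection `P` of the sum onto the summand, and embed `x₀` by
the inclusion `J`. The property of the sum yields an operator `S` attaining its norm at some `w`
with `‖w - J (P w)‖ < 1`. The sum norm is the maximum of the two component norms, so the segment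
from `J (P w)` through `w` can be prolonged beyond `w` inside the unit ball. The convex function
`‖S ·‖` is maximal at `w`, which is interior to this segment, hence is maximal at `J (P w)` too,
and `S ∘ J` attains its norm at `P w`.
-/

section MProjection

variable {E M : Type*} [NormedAddCommGroup E] [Ring M] [Module M E] {Q : M}

theorem norm_smul_le_of_isMprojection (hQ : IsMprojection E Q) (e : E) : ‖Q • e‖ ≤ ‖e‖ :=
  (le_max_left _ _).trans_eq (hQ.Mnorm e).symm

theorem norm_sub_smul_le_of_isMprojection (hQ : IsMprojection E Q) (e : E) :
    ‖e - Q • e‖ ≤ ‖e‖ := by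
  rw [hQ.Mnorm e, sub_smul, one_smul]
  exact le_max_right _ _

theorem norm_smul_add_sub_smul_of_isMprojection (hQ : IsMprojection E Q) (x y : E) :
    ‖Q • x + (y - Q • y)‖ = max ‖Q • x‖ ‖y - Q • y‖ := by
  have hQQ : ∀ e : E, Q • Q • e = Q • e := fun e => by rw [smul_smul, hQ.proj.eq]
  rw [hQ.Mnorm]
  simp only [sub_smul, one_smul, smul_add, smul_sub, hQQ, sub_self, add_zero, sub_zero, zero_add]

end MProjection

theorem norm_map_isMprojection_eq_norm {E F : Type*} [NormedAddCommGroup E] [NormedSpace ℝ E]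
    [NormedAddCommGroup F] [NormedSpace ℝ F] {Q : E →L[ℝ] E} (hQ : IsMprojection E Q)
    {S : E →L[ℝ] F} {w : E} (hw : ‖w‖ ≤ 1) (hSw : ‖S w‖ = ‖S‖) (hwQ : ‖w - Q w‖ < 1) :
    ‖S (Q w)‖ = ‖S‖ := by
  have hQw : ‖Q w‖ ≤ 1 := (norm_smul_le_of_isMprojection hQ w).trans hw
  obtain ⟨ε, hwε, hε1⟩ := exists_between hwQ
  have hε0 : 0 < ε := (norm_nonneg _).trans_lt hwε
  let v : E := Q w + ε⁻¹ • (w - Q w)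
  have hv : ‖v‖ ≤ 1 := calc
    ‖v‖ = max ‖Q w‖ ‖ε⁻¹ • (w - Q w)‖ := by
      simpa only [ContinuousLinearMap.smul_def, map_smul, ← smul_sub] using
        norm_smul_add_sub_smul_of_isMprojection hQ w (ε⁻¹ • w)
    _ ≤ 1 := max_le hQw <| by
      rw [norm_smul_of_nonneg (inv_nonneg.2 hε0.le), inv_mul_le_one₀ hε0]
      exact hwε.le
  have hwv : w ∈ openSegment ℝ (Q w) v := by
    refine ⟨1 - ε, ε, sub_pos.2 hε1, hε0, sub_add_cancel 1 ε, ?_⟩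
    rw [smul_add, smul_inv_smul₀ hε0.ne']
    module
  have hconv : ConvexOn ℝ Set.univ fun e => ‖S e‖ :=
    convexOn_univ_norm.comp_linearMap S.toLinearMap
  apply le_antisymm (S.unit_le_opNorm _ hQw)
  rw [← hSw]
  exact hconv.le_left_of_right_le trivial trivial hwv ((S.unit_le_opNorm v hv).trans_eq hSw.symm)

section Retract

variable {𝕜 X E Y : Type*} [NontriviallyNormedField 𝕜] [NormedAddCommGroup X] [NormedSpace 𝕜 X]
  [NormedAddCommGroup E] [NormedSpace 𝕜 E] [NormedAddCommGroup Y] [NormedSpace 𝕜 Y]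
  {J : X →L[𝕜] E} {P : E →L[𝕜] X}

theorem opNorm_comp_le_of_isometry (hJ : Isometry J) (S : E →L[𝕜] Y) : ‖S.comp J‖ ≤ ‖S‖ :=
  ContinuousLinearMap.opNorm_le_bound _ (norm_nonneg S) fun x =>
    S.le_opNorm_of_le (hJ.norm_map_of_map_zero (map_zero J) x).le

theorem opNorm_comp_eq_of_leftInverse (hJ : Isometry J) (hPJ : Function.LeftInverse P J)
    (hP : ∀ e, ‖P e‖ ≤ ‖e‖) (T : X →L[𝕜] Y) : ‖T.comp P‖ = ‖T‖ := by
  apply le_antisymm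
  · exact ContinuousLinearMap.opNorm_le_bound _ (norm_nonneg T) fun e => T.le_opNorm_of_le (hP e)
  · have hTPJ : (T.comp P).comp J = T := ContinuousLinearMap.ext fun x => congrArg T (hPJ x)
    simpa only [hTPJ] using opNorm_comp_le_of_isometry hJ (T.comp P)

end Retract

section LinftySum

variable {I : Type*} [DecidableEq I] {X : I → Type*} [∀ i, NormedAddCommGroup (X i)]

theorem linfty_norm_eq_max_single_sub_single (f : lp X ∞) (i : I) :
    ‖f‖ = max ‖lp.single ∞ i (f i)‖ ‖f - lp.single ∞ i (f i)‖ := by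
  have hfi : ‖lp.single ∞ i (f i)‖ = ‖f i‖ := lp.norm_single ENNReal.zero_lt_top i (f i)
  have hself : (f - lp.single ∞ i (f i)) i = 0 := by
    rw [lp.coeFn_sub, Pi.sub_apply, lp.single_apply_self, sub_self]
  have hne {j : I} (hj : j ≠ i) : (f - lp.single ∞ i (f i)) j = f j := by
    rw [lp.coeFn_sub, Pi.sub_apply, lp.single_apply_ne ∞ i _ hj, sub_zero]
  apply le_antisymm
  · refine lp.norm_le_of_forall_le (le_max_of_le_left (norm_nonneg _)) fun j => ?_
    obtain rfl | hj := eq_or_ne j i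
    · exact le_max_of_le_left hfi.ge
    · exact le_max_of_le_right (hne hj ▸ lp.norm_apply_le_norm ENNReal.top_ne_zero _ j)
  · refine max_le (hfi.trans_le (lp.norm_apply_le_norm ENNReal.top_ne_zero f i)) ?_
    refine lp.norm_mono ENNReal.top_ne_zero fun j => ?_
    obtain rfl | hj := eq_or_ne j i
    · rw [hself, norm_zero]
      exact norm_nonneg _
    · rw [hne hj]

theorem isMprojection_linfty_single_comp_eval (𝕜 : Type*) [NormedRing 𝕜] [∀ i, Module 𝕜 (X i)]
    [∀ i, IsBoundedSMul 𝕜 (X i)] (i : I) :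
    IsMprojection (lp X ∞)
      ((lp.singleContinuousLinearMap 𝕜 X ∞ i).comp (lp.evalCLM 𝕜 X ∞ i)) where
  proj := ContinuousLinearMap.ext fun f =>
    congrArg (lp.single ∞ i) (lp.single_apply_self ∞ i (f i))
  Mnorm f := by
    rw [sub_smul, one_smul]
    exact linfty_norm_eq_max_single_sub_single f i

end LinftySum

/-- The M-summand `X` of `E` is encoded by its inclusion `J` and the projection `P` onto it. -/
theorem bpbp_of_linfty_sum_domain_general {X E Y : Type*}
    [NormedAddCommGroup X] [NormedSpace ℝ X] [NormedAddCommGroup E] [NormedSpace ℝ E]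
    [NormedAddCommGroup Y] [NormedSpace ℝ Y] (J : X →L[ℝ] E) (P : E →L[ℝ] X) (hJ : Isometry J)
    (hPJ : Function.LeftInverse P J) (hM : IsMprojection E (J.comp P)) {η : ℝ → ℝ}
    (h : BPBpWith E Y η) : BPBpWith X Y η := by
  intro ε hε T₀ x₀ hT₀ hx₀ hTx₀
  have hJnorm (x : X) : ‖J x‖ = ‖x‖ := hJ.norm_map_of_map_zero (map_zero J) x
  have hPnorm (e : E) : ‖P e‖ ≤ ‖e‖ :=
    (hJnorm (P e)).symm.trans_le (norm_smul_le_of_isMprojection hM e)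
  obtain ⟨S, w, hw, hS, hSw, hwx₀, hST₀⟩ := h ε hε (T₀.comp P) (J x₀)
    ((opNorm_comp_eq_of_leftInverse hJ hPJ hPnorm T₀).trans hT₀) ((hJnorm x₀).trans hx₀)
    (by rwa [ContinuousLinearMap.comp_apply, hPJ])
  have hdist : ‖w - J (P w)‖ ≤ ‖w - J x₀‖ := by
    simpa [hPJ x₀] using norm_sub_smul_le_of_isMprojection hM (w - J x₀)
  have hattain : ‖S (J (P w))‖ = 1 :=
    (norm_map_isMprojection_eq_norm hM hw.le (hSw.trans hS.symm)
      (hdist.trans_lt (hwx₀.trans hε.2))).trans hS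
  have hSJ : ‖S.comp J‖ ≤ 1 := (opNorm_comp_le_of_isometry hJ S).trans_eq hS
  have hPw : ‖P w‖ ≤ 1 := (hPnorm w).trans_eq hw
  refine ⟨S.comp J, P w, hPw.antisymm ?_, hSJ.antisymm ?_, hattain, ?_, ?_⟩
  · calc
      1 = ‖S.comp J (P w)‖ := hattain.symm
      _ ≤ 1 * ‖P w‖ := (S.comp J).le_of_opNorm_le hSJ (P w)
      _ = ‖P w‖ := one_mul _
  · exact hattain.symm.trans_le ((S.comp J).unit_le_opNorm (P w) hPw)
  · calc
      ‖P w - x₀‖ = ‖P (w - J x₀)‖ := by rw [map_sub, hPJ]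
      _ ≤ ‖w - J x₀‖ := hPnorm _
      _ < ε := hwx₀
  · have hcomp : S.comp J - T₀ = (S - T₀.comp P).comp J := by
      ext x
      simp [hPJ x]
    rw [hcomp]
    exact (opNorm_comp_le_of_isometry hJ _).trans_lt hST₀

/-- If the pair `([⊕ᵢ Xᵢ]_{ℓ∞}, Y)` has the BPBp with a function `η`, then every pair
`(Xᵢ, Y)` has the BPBp with the same function `η`. -/
theorem bpbp_of_linfty_sum_domain
    {I : Type*} (X : I → Type*) (Y : Type*)
    [∀ i, NormedAddCommGroup (X i)] [∀ i, NormedSpace ℝ (X i)] [∀ i, CompleteSpace (X i)]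
    [NormedAddCommGroup Y] [NormedSpace ℝ Y] [CompleteSpace Y]
    (η : ℝ → ℝ) (hη : ∀ ε ∈ Set.Ioo (0 : ℝ) 1, 0 < η ε)
    (h : BPBpWith (lp (fun i => X i) ∞) Y η) :
    ∀ i : I, BPBpWith (X i) Y η := by
  classical
  exact fun i => bpbp_of_linfty_sum_domain_general (lp.singleContinuousLinearMap ℝ X ∞ i)
    (lp.evalCLM ℝ X ∞ i) (lp.isometry_single i) (lp.single_apply_self ∞ i)
    (isMprojection_linfty_single_comp_eval ℝ i) h
end

section
/- Let X₁ and X₂ be Banach spaces over ℝ, let X = X₁ ⊕_∞ X₂ (the product X₁ × X₂ with the maximum norm), and let Y be a Banach space over ℝ. If the pair (X,Y) has the Bishop–Phelps–Bollobás property with a function η : (0,1) → (0,∞), then the pair (X₁, Y) also has the Bishop–Phelps–Bollobás property with the same function η. -/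
open scoped ENNReal

/-!
Let `T` attain its norm at `z = (z₁, z₂)` in `E ⊕_∞ F` with `‖z₂‖ < ‖z₁‖`. Then `‖z₁‖ • z` is the
sum of `(‖z₁‖ - ‖z₂‖) • (z₁, 0)` and of a vector of norm at most `‖z₁‖ * ‖z₂‖`; since `T` loses no
norm on the whole, it loses none on `(z₁, 0)`. Given `T₀ : X₁ → Y` and `x₀`, apply the property of
`X₁ ⊕_∞ X₂` to `T₀ ∘ fst` and `(x₀, 0)`. The point obtained has norm `1` and a second component
smaller than `ε < 1`, so the new operator restricted to `X₁` attains its norm at the first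
component.
-/

section OperatorNorm

variable {𝕜 E F G : Type*} [NontriviallyNormedField 𝕜]
  [SeminormedAddCommGroup E] [NormedSpace 𝕜 E] [SeminormedAddCommGroup F] [NormedSpace 𝕜 F]
  [SeminormedAddCommGroup G] [NormedSpace 𝕜 G]

open ContinuousLinearMap (inl fst)

theorem opNorm_comp_inl_le (T : E × F →L[𝕜] G) : ‖T ∘L inl 𝕜 E F‖ ≤ ‖T‖ :=
  (T.opNorm_comp_le _).trans <|
    mul_le_of_le_one_right (norm_nonneg T) (ContinuousLinearMap.norm_inl_le_one 𝕜 E F)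

theorem opNorm_comp_fst (T : E →L[𝕜] G) : ‖T ∘L fst 𝕜 E F‖ = ‖T‖ :=
  le_antisymm
    ((T.opNorm_comp_le _).trans <|
      mul_le_of_le_one_right (norm_nonneg T) (ContinuousLinearMap.norm_fst_le 𝕜 E F))
    (opNorm_comp_inl_le (T ∘L fst 𝕜 E F))

end OperatorNorm

theorem norm_apply_fst_zero_eq_opNorm_mul {𝕜 E F G : Type*} [RCLike 𝕜]
    [SeminormedAddCommGroup E] [NormedSpace 𝕜 E] [SeminormedAddCommGroup F] [NormedSpace 𝕜 F]
    [SeminormedAddCommGroup G] [NormedSpace 𝕜 G]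
    (T : E × F →L[𝕜] G) {z : E × F} (hz : ‖z.2‖ < ‖z.1‖)
    (hT : ‖T z‖ = ‖T‖ * ‖z‖) : ‖T (z.1, 0)‖ = ‖T‖ * ‖z.1‖ := by
  set a := ‖z.1‖ with ha
  set b := ‖z.2‖ with hb
  have norm_z : ‖z‖ = a := max_eq_left hz.le
  have norm_inl : ‖((z.1, 0) : E × F)‖ = a := by simp [Prod.norm_def, ha]
  have hb₀ : 0 ≤ b := norm_nonneg _
  have ha₀ : 0 ≤ a := norm_nonneg _
  let w : E × F := ((b : 𝕜) • z.1, (a : 𝕜) • z.2)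
  have norm_w : ‖w‖ = a * b := by
    simp [w, Prod.norm_def, norm_smul, ← ha, ← hb, mul_comm, abs_of_nonneg, ha₀, hb₀]
  have decomposition : (a : 𝕜) • z = ((a - b : ℝ) : 𝕜) • (z.1, 0) + w := by
    ext
    · simp [w, sub_smul]
    · simp [w]
  have bound : a * (‖T‖ * a) ≤ (a - b) * ‖T (z.1, 0)‖ + ‖T‖ * (a * b) := calc
    a * (‖T‖ * a) = ‖T ((a : 𝕜) • z)‖ := by
      rw [map_smul, norm_smul, RCLike.norm_of_nonneg ha₀, hT, norm_z]
    _ = ‖((a - b : ℝ) : 𝕜) • T (z.1, 0) + T w‖ := by rw [decomposition, map_add, map_smul]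
    _ ≤ ‖((a - b : ℝ) : 𝕜) • T (z.1, 0)‖ + ‖T w‖ := norm_add_le _ _
    _ ≤ (a - b) * ‖T (z.1, 0)‖ + ‖T‖ * (a * b) := by
      rw [norm_smul, RCLike.norm_of_nonneg (sub_nonneg.2 hz.le), ← norm_w]
      gcongr
      exact T.le_opNorm w
  refine le_antisymm (norm_inl ▸ T.le_opNorm _) (le_of_mul_le_mul_left ?_ (sub_pos.2 hz))
  linarith

namespace BPBpWith

variable {X X' X₁ X₂ Y : Type*} [NormedAddCommGroup X] [NormedSpace ℝ X]
  [NormedAddCommGroup X'] [NormedSpace ℝ X'] [NormedAddCommGroup X₁] [NormedSpace ℝ X₁]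
  [NormedAddCommGroup X₂] [NormedSpace ℝ X₂] [NormedAddCommGroup Y] [NormedSpace ℝ Y]
  {η : ℝ → ℝ}

theorem congr_domain (h : BPBpWith X Y η) (e : X ≃ₗᵢ[ℝ] X') : BPBpWith X' Y η := by
  intro ε hε T₀ x₀ hT₀ hx₀ hT₀x₀
  have norm_comp (T : X →L[ℝ] Y) : ‖T ∘L (e.symm : X' →L[ℝ] X)‖ = ‖T‖ :=
    T.opNorm_comp_linearIsometryEquiv e.symm
  obtain ⟨S, x, hx, hS, hSx, hxx₀, hST₀⟩ := h ε hε (T₀ ∘L (e : X →L[ℝ] X')) (e.symm x₀)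
    ((T₀.opNorm_comp_linearIsometryEquiv e).trans hT₀) ((e.symm.norm_map x₀).trans hx₀)
    (by simpa using hT₀x₀)
  refine ⟨S ∘L (e.symm : X' →L[ℝ] X), e x, (e.norm_map x).trans hx, (norm_comp S).trans hS,
    by simpa using hSx, ?_, ?_⟩
  · rwa [← e.symm.norm_map, map_sub, e.symm_apply_apply]
  · have restrict : S ∘L (e.symm : X' →L[ℝ] X) - T₀
        = (S - T₀ ∘L (e : X →L[ℝ] X')) ∘L (e.symm : X' →L[ℝ] X) := by
      ext; simp
    rwa [restrict, norm_comp]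

theorem of_prod (h : BPBpWith (X₁ × X₂) Y η) : BPBpWith X₁ Y η := by
  intro ε hε T₀ x₀ hT₀ hx₀ hT₀x₀
  obtain ⟨S, x, hx, hS, hSx, hxx₀, hST₀⟩ := h ε hε (T₀ ∘L .fst ℝ X₁ X₂) (x₀, 0)
    ((opNorm_comp_fst T₀).trans hT₀) (by simp [Prod.norm_def, hx₀]) hT₀x₀
  have snd_lt_one : ‖x.2‖ < 1 := calc
    ‖x.2‖ = ‖(x - (x₀, 0)).2‖ := by simp
    _ ≤ ‖x - (x₀, 0)‖ := norm_snd_le _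
    _ < 1 := hxx₀.trans hε.2
  have norm_fst : ‖x.1‖ = 1 := by
    rw [Prod.norm_def] at hx
    exact (max_eq_iff.1 hx).elim And.left fun h_snd => absurd h_snd.1 snd_lt_one.ne
  let S₁ : X₁ →L[ℝ] Y := S ∘L .inl ℝ X₁ X₂
  have attains : ‖S₁ x.1‖ = 1 := calc
    ‖S₁ x.1‖ = ‖S‖ * ‖x.1‖ :=
      norm_apply_fst_zero_eq_opNorm_mul S (norm_fst ▸ snd_lt_one) (by rw [hSx, hS, hx, one_mul])
    _ = 1 := by rw [hS, norm_fst, one_mul]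
  have norm_S₁ : ‖S₁‖ = 1 :=
    le_antisymm (hS ▸ opNorm_comp_inl_le S) (attains ▸ S₁.unit_le_opNorm x.1 norm_fst.le)
  exact ⟨S₁, x.1, norm_fst, norm_S₁, attains, (norm_fst_le (x - (x₀, 0))).trans_lt hxx₀,
    (opNorm_comp_inl_le (S - T₀ ∘L .fst ℝ X₁ X₂)).trans_lt hST₀⟩

end BPBpWith

theorem bpbp_of_linfty_prod_domain_general {X₁ X₂ Y : Type*}
    [NormedAddCommGroup X₁] [NormedSpace ℝ X₁] [NormedAddCommGroup X₂] [NormedSpace ℝ X₂]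
    [NormedAddCommGroup Y] [NormedSpace ℝ Y] {η : ℝ → ℝ}
    (h : BPBpWith (WithLp ∞ (X₁ × X₂)) Y η) : BPBpWith X₁ Y η :=
  (h.congr_domain WithLp.prodEquivₗᵢ).of_prod

/-- If the pair `(X₁ ⊕_∞ X₂, Y)` has the BPBp with a function `η`, then the pair `(X₁, Y)`
has the BPBp with the same function `η`. -/
theorem bpbp_of_linfty_prod_domain
    (X₁ X₂ Y : Type*)
    [NormedAddCommGroup X₁] [NormedSpace ℝ X₁] [CompleteSpace X₁]
    [NormedAddCommGroup X₂] [NormedSpace ℝ X₂] [CompleteSpace X₂]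
    [NormedAddCommGroup Y] [NormedSpace ℝ Y] [CompleteSpace Y]
    (η : ℝ → ℝ) (hη : ∀ ε ∈ Set.Ioo (0 : ℝ) 1, 0 < η ε)
    (h : BPBpWith (WithLp ∞ (X₁ × X₂)) Y η) :
    BPBpWith X₁ Y η :=
  bpbp_of_linfty_prod_domain_general h
end

section
/- Let Y₁ and Y₂ be Banach spaces over ℝ, let Y = Y₁ ⊕₁ Y₂ (the product Y₁ × Y₂ with the sum norm), and let X be a Banach space over ℝ. If the pair (X,Y) has the Bishop–Phelps–Bollobás property with a function η : (0,1) → (0,∞), then the pair (X, Y₁) also has the Bishop–Phelps–Bollobás property with the same function η. -/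
open scoped ENNReal

/-!
Embed `Y₁` isometrically in `Y₁ ⊕₁ Y₂` by `J`, apply the hypothesis to `J ∘ T₀`, and come back from
the perturbed operator `S` with a norm-one left inverse `P` of `J`, so that
`‖P ∘ S - T₀‖ = ‖P ∘ (S - J ∘ T₀)‖ ≤ ‖S - J ∘ T₀‖`. The projection onto `Y₁` may fail to preserve
the norm of `S x`, so `P` is adapted to the vector `S x = (y₁, y₂)`: take `P (a, b) = a + g b • u`
with `u` a unit vector in the direction of `y₁` (arbitrary if `y₁ = 0`) and `g` a functional of
norm at most one with `g y₂ = ‖y₂‖`.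
-/

section WithLpProd

variable {𝕜 E F G : Type*} [NontriviallyNormedField 𝕜]
  [SeminormedAddCommGroup E] [NormedSpace 𝕜 E] [SeminormedAddCommGroup F] [NormedSpace 𝕜 F]
  [SeminormedAddCommGroup G] [NormedSpace 𝕜 G]

variable (𝕜 E F) in
/-- The isometric inclusion of the first summand into an `ℓᵖ`-sum. -/
noncomputable def withLpInl (p : ℝ≥0∞) [Fact (1 ≤ p)] : E →ₗᵢ[𝕜] WithLp p (E × F) where
  toLinearMap := (WithLp.linearEquiv p 𝕜 (E × F)).symm.toLinearMap ∘ₗ LinearMap.inl 𝕜 E F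
  norm_map' := WithLp.norm_toLp_fst p E F

@[simp]
lemma withLpInl_apply (p : ℝ≥0∞) [Fact (1 ≤ p)] (a : E) :
    withLpInl 𝕜 E F p a = WithLp.toLp p (a, 0) :=
  rfl

/-- The operator `(a, b) ↦ A a + B b` on the `ℓ¹`-sum, which is the coproduct of normed spaces
with respect to contractions. -/
noncomputable def l1Coprod (A : E →L[𝕜] G) (B : F →L[𝕜] G) : WithLp 1 (E × F) →L[𝕜] G :=
  A ∘L WithLp.fstL 1 𝕜 E F + B ∘L WithLp.sndL 1 𝕜 E F

@[simp]
lemma l1Coprod_apply (A : E →L[𝕜] G) (B : F →L[𝕜] G) (w : WithLp 1 (E × F)) :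
    l1Coprod A B w = A w.fst + B w.snd :=
  rfl

lemma norm_l1Coprod_le (A : E →L[𝕜] G) (B : F →L[𝕜] G) :
    ‖l1Coprod A B‖ ≤ max ‖A‖ ‖B‖ := by
  refine ContinuousLinearMap.opNorm_le_bound _ (by positivity) fun w => ?_
  calc ‖A w.fst + B w.snd‖
      ≤ ‖A w.fst‖ + ‖B w.snd‖ := norm_add_le _ _
    _ ≤ max ‖A‖ ‖B‖ * ‖w.fst‖ + max ‖A‖ ‖B‖ * ‖w.snd‖ :=
        add_le_add (A.le_of_opNorm_le (le_max_left _ _) _) (B.le_of_opNorm_le (le_max_right _ _) _)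
    _ = max ‖A‖ ‖B‖ * ‖w‖ := by rw [← mul_add, WithLp.prod_norm_eq_of_L1]

end WithLpProd

section NormPreservingLeftInverse

variable (𝕜 : Type*) {E F : Type*} [RCLike 𝕜] [NormedAddCommGroup E] [NormedSpace 𝕜 E]

lemma exists_norm_eq_one_norm_smul_eq [Nontrivial E] (a : E) :
    ∃ u : E, ‖u‖ = 1 ∧ (‖a‖ : 𝕜) • u = a := by
  rcases eq_or_ne a 0 with rfl | ha
  · obtain ⟨v, hv⟩ := exists_ne (0 : E)
    exact ⟨(‖v‖⁻¹ : 𝕜) • v, norm_smul_inv_norm hv, by simp⟩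
  · have ha' : (‖a‖ : 𝕜) ≠ 0 := RCLike.ofReal_ne_zero.2 (norm_ne_zero_iff.2 ha)
    exact ⟨(‖a‖⁻¹ : 𝕜) • a, norm_smul_inv_norm ha, smul_inv_smul₀ ha' a⟩

lemma exists_leftInverse_withLpInl_norm_apply_eq [SeminormedAddCommGroup F] [NormedSpace 𝕜 F]
    [Nontrivial E] (w : WithLp 1 (E × F)) :
    ∃ P : WithLp 1 (E × F) →L[𝕜] E,
      ‖P‖ ≤ 1 ∧ Function.LeftInverse P (withLpInl 𝕜 E F 1) ∧ ‖P w‖ = ‖w‖ := by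
  obtain ⟨u, hu, hwu⟩ := exists_norm_eq_one_norm_smul_eq 𝕜 w.fst
  obtain ⟨g, hg, hgw⟩ := exists_dual_vector'' 𝕜 w.snd
  refine ⟨l1Coprod (.id 𝕜 E) (g.smulRight u), ?_, fun a => by simp, ?_⟩
  · refine (norm_l1Coprod_le _ _).trans (max_le ContinuousLinearMap.norm_id_le ?_)
    rwa [ContinuousLinearMap.norm_smulRight_apply, hu, mul_one]
  · calc ‖w.fst + g w.snd • u‖
        = ‖((‖w.fst‖ + ‖w.snd‖ : ℝ) : 𝕜) • u‖ := by
          rw [hgw, RCLike.ofReal_add, add_smul, hwu]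
      _ = ‖w.fst‖ + ‖w.snd‖ := by
          rw [norm_smul, hu, mul_one, RCLike.norm_of_nonneg (by positivity)]
      _ = ‖w‖ := (WithLp.prod_norm_eq_of_L1 w).symm

end NormPreservingLeftInverse

namespace BPBpWith

variable {X Y Z : Type*} [NormedAddCommGroup X] [NormedSpace ℝ X]
  [NormedAddCommGroup Y] [NormedSpace ℝ Y] [NormedAddCommGroup Z] [NormedSpace ℝ Z] {η : ℝ → ℝ}

lemma of_subsingleton_range [Subsingleton Z] : BPBpWith X Z η := by
  intro ε _ T₀ x₀ hT₀
  simp [Subsingleton.elim T₀ 0] at hT₀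

lemma of_leftInverse_norm_apply_eq (h : BPBpWith X Y η) (J : Z →ₗᵢ[ℝ] Y)
    (hJ : ∀ y : Y, ∃ P : Y →L[ℝ] Z, ‖P‖ ≤ 1 ∧ Function.LeftInverse P J ∧ ‖P y‖ = ‖y‖) :
    BPBpWith X Z η := by
  intro ε hε T₀ x₀ hT₀ hx₀ hT₀x₀
  obtain ⟨S, x, hx, hS, hSx, hxx₀, hST₀⟩ := h ε hε (J.toContinuousLinearMap ∘L T₀) x₀
    (by rw [J.norm_toContinuousLinearMap_comp, hT₀]) hx₀ (by simpa using hT₀x₀)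
  obtain ⟨P, hP, hPJ, hPSx⟩ := hJ (S x)
  have norm_comp_le (R : X →L[ℝ] Y) : ‖P ∘L R‖ ≤ ‖R‖ :=
    (P.opNorm_comp_le R).trans (mul_le_of_le_one_left (norm_nonneg R) hP)
  have hPSx_one : ‖(P ∘L S) x‖ = 1 := hPSx.trans hSx
  have hPS : ‖P ∘L S‖ = 1 := le_antisymm ((norm_comp_le S).trans_eq hS)
    (hPSx_one.symm.trans_le ((P ∘L S).unit_le_opNorm x hx.le))
  have hPST₀ : P ∘L S - T₀ = P ∘L (S - J.toContinuousLinearMap ∘L T₀) := by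
    ext z
    simp [hPJ (T₀ z)]
  exact ⟨P ∘L S, x, hx, hPS, hPSx_one, hxx₀, hPST₀ ▸ (norm_comp_le _).trans_lt hST₀⟩

end BPBpWith

theorem bpbp_of_l1_prod_range_general {X Y₁ Y₂ : Type*}
    [NormedAddCommGroup X] [NormedSpace ℝ X] [NormedAddCommGroup Y₁] [NormedSpace ℝ Y₁]
    [NormedAddCommGroup Y₂] [NormedSpace ℝ Y₂] {η : ℝ → ℝ}
    (h : BPBpWith X (WithLp 1 (Y₁ × Y₂)) η) : BPBpWith X Y₁ η := by
  rcases subsingleton_or_nontrivial Y₁ with _ | _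
  · exact BPBpWith.of_subsingleton_range
  · exact h.of_leftInverse_norm_apply_eq (withLpInl ℝ Y₁ Y₂ 1)
      (exists_leftInverse_withLpInl_norm_apply_eq ℝ)

/-- If the pair `(X, Y₁ ⊕₁ Y₂)` has the BPBp with a function `η`, then the pair `(X, Y₁)`
has the BPBp with the same function `η`. -/
theorem bpbp_of_l1_prod_range
    (X Y₁ Y₂ : Type*)
    [NormedAddCommGroup X] [NormedSpace ℝ X] [CompleteSpace X]
    [NormedAddCommGroup Y₁] [NormedSpace ℝ Y₁] [CompleteSpace Y₁]
    [NormedAddCommGroup Y₂] [NormedSpace ℝ Y₂] [CompleteSpace Y₂]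
    (η : ℝ → ℝ) (hη : ∀ ε ∈ Set.Ioo (0 : ℝ) 1, 0 < η ε)
    (h : BPBpWith X (WithLp 1 (Y₁ × Y₂)) η) :
    BPBpWith X Y₁ η :=
  bpbp_of_l1_prod_range_general h
end

section
/- Let X and Y be Banach spaces over ℝ and let K be a compact Hausdorff topological space. If the pair (X, C(K,Y)) has the Bishop–Phelps–Bollobás property with a function η : (0,1) → (0,∞), where C(K,Y) denotes the Banach space of continuous functions from K to Y with the supremum norm, then the pair (X,Y) also has the Bishop–Phelps–Bollobás property with the same function η. -/
open scoped ENNReal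

/-!
Constant functions embed `Y` isometrically into `C(K, Y)`, and every evaluation `f ↦ f t` is a
contractive left inverse of this embedding. View an operator into `Y` as one into `C(K, Y)`,
approximate it there by some `S` attaining its norm at `x`, and evaluate at a point of `K` where
the continuous function `S x` attains its norm: as the evaluation is a contraction, the
approximation survives, and by the choice of the point so does the norm attainment.
-/

section NormingRetractions

variable {X Y Z ι : Type*} [NormedAddCommGroup X] [NormedSpace ℝ X]
  [NormedAddCommGroup Y] [NormedSpace ℝ Y] [NormedAddCommGroup Z] [NormedSpace ℝ Z]

theorem BPBpWith.of_norming_retractions {η : ℝ → ℝ} (h : BPBpWith X Z η)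
    (J : Y →ₗᵢ[ℝ] Z) (P : ι → Z →L[ℝ] Y) (norm_P_le : ∀ i, ‖P i‖ ≤ 1)
    (P_J : ∀ i y, P i (J y) = y) (exists_norm_P : ∀ z, ∃ i, ‖P i z‖ = ‖z‖) :
    BPBpWith X Y η := by
  intro ε hε T₀ x₀ hT₀ hx₀ hT₀x₀
  let JT₀ : X →L[ℝ] Z := J.toContinuousLinearMap ∘L T₀
  have norm_JT₀ : ‖JT₀‖ = 1 := J.norm_toContinuousLinearMap_comp.trans hT₀
  have norm_JT₀_x₀ : ‖JT₀ x₀‖ = ‖T₀ x₀‖ := J.norm_map (T₀ x₀)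
  obtain ⟨S, x, hx, hS, hSx, hxx₀, hST₀⟩ :=
    h ε hε JT₀ x₀ norm_JT₀ hx₀ (hT₀x₀.trans_eq norm_JT₀_x₀.symm)
  obtain ⟨i, hi⟩ := exists_norm_P (S x)
  have norm_comp_le (A : X →L[ℝ] Z) : ‖P i ∘L A‖ ≤ ‖A‖ :=
    ((P i).opNorm_comp_le A).trans (mul_le_of_le_one_left (norm_nonneg A) (norm_P_le i))
  have norm_PSx : ‖(P i ∘L S) x‖ = 1 := hi.trans hSx
  have norm_PS : ‖P i ∘L S‖ = 1 :=
    ((norm_comp_le S).trans_eq hS).antisymm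
      (norm_PSx.symm.trans_le ((P i ∘L S).unit_le_opNorm x hx.le))
  have PS_sub_T₀ : P i ∘L S - T₀ = P i ∘L (S - JT₀) := by
    ext z
    simp [JT₀, P_J]
  exact ⟨P i ∘L S, x, hx, norm_PS, norm_PSx, hxx₀,
    PS_sub_T₀ ▸ (norm_comp_le (S - JT₀)).trans_lt hST₀⟩

end NormingRetractions

section ContinuousMap

variable {K E : Type*} [TopologicalSpace K] [CompactSpace K] [SeminormedAddCommGroup E]

theorem exists_norm_apply_eq_norm [Nonempty K] (f : C(K, E)) : ∃ t, ‖f t‖ = ‖f‖ := by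
  obtain ⟨t, -, ht⟩ := isCompact_univ.exists_isMaxOn Set.univ_nonempty
    f.continuous.norm.continuousOn
  exact ⟨t, (f.norm_coe_le_norm t).antisymm
    (f.norm_le_of_nonempty.2 fun s ↦ ht (Set.mem_univ s))⟩

variable (𝕜 : Type*) [NontriviallyNormedField 𝕜] [NormedSpace 𝕜 E]

theorem norm_evalCLM_le (t : K) : ‖(ContinuousMap.evalCLM 𝕜 t : C(K, E) →L[𝕜] E)‖ ≤ 1 :=
  ContinuousLinearMap.opNorm_le_bound _ zero_le_one fun f ↦
    (f.norm_coe_le_norm t).trans_eq (one_mul ‖f‖).symm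

variable (K E) in
/-- The isometric embedding of `E` into `C(K, E)` as the constant functions. -/
def constLinearIsometry [Nonempty K] : E →ₗᵢ[𝕜] C(K, E) where
  toFun := ContinuousMap.const K
  map_add' _ _ := rfl
  map_smul' _ _ := rfl
  norm_map' := BoundedContinuousFunction.norm_const_eq

end ContinuousMap

theorem bpbp_of_continuousMap_range_general
    {X Y K : Type*} [NormedAddCommGroup X] [NormedSpace ℝ X]
    [NormedAddCommGroup Y] [NormedSpace ℝ Y]
    [TopologicalSpace K] [CompactSpace K] [Nonempty K]
    {η : ℝ → ℝ} (h : BPBpWith X C(K, Y) η) :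
    BPBpWith X Y η :=
  h.of_norming_retractions (constLinearIsometry K Y ℝ) (ContinuousMap.evalCLM ℝ)
    (norm_evalCLM_le ℝ) (fun _ _ ↦ rfl) exists_norm_apply_eq_norm

/-- If `(X, C(K, Y))` has the BPBp with a function `η`, where `K` is a nonempty compact
Hausdorff space, then `(X, Y)` has the BPBp with the same function `η`. -/
theorem bpbp_of_continuousMap_range
    (X Y K : Type*)
    [NormedAddCommGroup X] [NormedSpace ℝ X] [CompleteSpace X]
    [NormedAddCommGroup Y] [NormedSpace ℝ Y] [CompleteSpace Y]
    [TopologicalSpace K] [CompactSpace K] [T2Space K] [Nonempty K]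
    (η : ℝ → ℝ) (hη : ∀ ε ∈ Set.Ioo (0 : ℝ) 1, 0 < η ε)
    (h : BPBpWith X C(K, Y) η) :
    BPBpWith X Y η :=
  bpbp_of_continuousMap_range_general h
end

section
/- Let {Y_j}_{j∈J} be a family of Banach spaces over ℝ, let Y = [⊕_{j∈J} Y_j]_{ℓ1} be their ℓ1-sum, and let X be a Banach space over ℝ. If the set NA(X,Y) of norm-attaining bounded linear operators from X to Y is dense in the space L(X,Y) of all bounded linear operators (with the operator norm), then for every j ∈ J the set NA(X,Y_j) is dense in L(X,Y_j). -/
open scoped ENNReal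

/-- A bounded linear operator `T : X → Y` attains its norm if `‖T x‖ = ‖T‖` for some `x` of
norm one. -/
def NormAttaining {X Y : Type*} [NormedAddCommGroup X] [NormedSpace ℝ X]
    [NormedAddCommGroup Y] [NormedSpace ℝ Y] (T : X →L[ℝ] Y) : Prop :=
  ∃ x : X, ‖x‖ = 1 ∧ ‖T x‖ = ‖T‖

/-!
Regard `Y j ≠ 0` as the `j`-th coordinate subspace of the `ℓ¹`-sum `Z`. For every `w : Z` there is
a norm-one projection of `Z` onto `Y j` which preserves the norm of `w`: keep the `j`-th coordinate,
apply to the rest of the vector a functional norming the rest of `w`, and put the resulting scalar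
on a unit vector of `Y j` pointing in the direction of `w j`. The `ℓ¹`-norm is exactly what makes
the two contributions add up. Now regard `T : X → Y j` as an operator into `Z` and approximate it
by `S` attaining its norm at `x`. Composing `S` with the projection that preserves the norm of
`S x` gives an operator into `Y j` which attains its norm at `x` and is no farther from `T`.
-/

section NormAttaining

variable {X Y Z : Type*} [NormedAddCommGroup X] [NormedSpace ℝ X]
  [NormedAddCommGroup Y] [NormedSpace ℝ Y] [NormedAddCommGroup Z] [NormedSpace ℝ Z]

theorem NormAttaining.nontrivial {T : X →L[ℝ] Y} (hT : NormAttaining T) : Nontrivial X := by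
  obtain ⟨x, hx, -⟩ := hT
  exact ⟨x, 0, norm_ne_zero_iff.mp (hx ▸ one_ne_zero)⟩

theorem NormAttaining.of_subsingleton [Nontrivial X] [Subsingleton Y] (T : X →L[ℝ] Y) :
    NormAttaining T := by
  obtain ⟨x, hx⟩ := exists_norm_eq X zero_le_one
  exact ⟨x, hx, by rw [Subsingleton.elim T 0, zero_apply, norm_zero, norm_zero]⟩

theorem NormAttaining.comp_of_norm_apply_eq {T : X →L[ℝ] Z} {Q : Z →L[ℝ] Y} {x : X}
    (hx : ‖x‖ = 1) (hTx : ‖T x‖ = ‖T‖) (hQ : ‖Q‖ ≤ 1) (hQx : ‖Q (T x)‖ = ‖T x‖) :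
    NormAttaining (Q ∘L T) := by
  refine ⟨x, hx, le_antisymm ((Q ∘L T).unit_le_opNorm x hx.le) ?_⟩
  calc ‖Q ∘L T‖ ≤ ‖Q‖ * ‖T‖ := Q.opNorm_comp_le T
    _ ≤ ‖T‖ := mul_le_of_le_one_left (norm_nonneg T) hQ
    _ = ‖(Q ∘L T) x‖ := by rw [ContinuousLinearMap.comp_apply, hQx, hTx]

theorem dense_normAttaining_of_contractive_retractions (i : Y →L[ℝ] Z)
    (hi : ∀ w : Z, ∃ Q : Z →L[ℝ] Y, ‖Q‖ ≤ 1 ∧ Q ∘L i = .id ℝ Y ∧ ‖Q w‖ = ‖w‖)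
    (h : Dense {T : X →L[ℝ] Z | NormAttaining T}) :
    Dense {T : X →L[ℝ] Y | NormAttaining T} := by
  rw [Metric.dense_iff]
  intro T ε hε
  obtain ⟨S, hS, x, hx, hSx⟩ := Metric.dense_iff.mp h (i ∘L T) ε hε
  obtain ⟨Q, hQ, hQi, hQSx⟩ := hi (S x)
  refine ⟨Q ∘L S, ?_, .comp_of_norm_apply_eq hx hSx hQ hQSx⟩
  have factor : Q ∘L S - T = Q ∘L (S - i ∘L T) := by
    rw [ContinuousLinearMap.comp_sub, ← ContinuousLinearMap.comp_assoc, hQi,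
      ContinuousLinearMap.id_comp]
  rw [mem_ball_iff_norm] at hS ⊢
  calc ‖Q ∘L S - T‖ = ‖Q ∘L (S - i ∘L T)‖ := by rw [factor]
    _ ≤ ‖Q‖ * ‖S - i ∘L T‖ := Q.opNorm_comp_le _
    _ ≤ ‖S - i ∘L T‖ := mul_le_of_le_one_left (norm_nonneg _) hQ
    _ < ε := hS

end NormAttaining

theorem exists_norm_eq_one_and_eq_norm_smul (𝕜 : Type*) [RCLike 𝕜] {E : Type*}
    [NormedAddCommGroup E] [NormedSpace 𝕜 E] [Nontrivial E] (y : E) :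
    ∃ u : E, ‖u‖ = 1 ∧ y = (‖y‖ : 𝕜) • u := by
  rcases eq_or_ne y 0 with rfl | hy
  · obtain ⟨z, hz⟩ := exists_ne (0 : E)
    exact ⟨_, norm_smul_inv_norm (𝕜 := 𝕜) hz, by rw [norm_zero, RCLike.ofReal_zero, zero_smul]⟩
  · have norm_y_ne_zero : (‖y‖ : 𝕜) ≠ 0 := RCLike.ofReal_ne_zero.mpr (norm_ne_zero_iff.mpr hy)
    exact ⟨_, norm_smul_inv_norm (𝕜 := 𝕜) hy, (smul_inv_smul₀ norm_y_ne_zero y).symm⟩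

section LpFold

variable {J : Type*} [DecidableEq J] {Y : J → Type*} [∀ j, NormedAddCommGroup (Y j)]

theorem norm_lp_one_eq_norm_apply_add_norm_sub_single (j : J) (v : lp Y 1) :
    ‖v‖ = ‖v j‖ + ‖v - lp.single 1 j (v j)‖ := by
  have h := lp.norm_sub_norm_compl_sub_single (ENNReal.toReal_one ▸ one_pos) v {j}
  simp only [ENNReal.toReal_one, Real.rpow_one, Finset.sum_singleton] at h
  exact sub_eq_iff_eq_add.mp h

section NormedField

variable {𝕜 : Type*} [NormedField 𝕜] [∀ j, NormedSpace 𝕜 (Y j)]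
  {p : ℝ≥0∞} [Fact (1 ≤ p)]

/-- The projection of an `ℓᵖ`-sum onto its `j`-th summand that keeps the `j`-th coordinate and
folds all the other ones into the line spanned by `u`, by means of the functional `φ`. -/
noncomputable def lpFold (j : J) (φ : StrongDual 𝕜 (lp Y p)) (u : Y j) : lp Y p →L[𝕜] Y j :=
  lp.evalCLM 𝕜 Y p j +
    (φ ∘L (.id 𝕜 (lp Y p) - lp.singleContinuousLinearMap 𝕜 Y p j ∘L lp.evalCLM 𝕜 Y p j)).smulRight u

theorem lpFold_apply (j : J) (φ : StrongDual 𝕜 (lp Y p)) (u : Y j) (v : lp Y p) :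
    lpFold j φ u v = v j + φ (v - lp.single p j (v j)) • u :=
  rfl

theorem lpFold_comp_single (j : J) (φ : StrongDual 𝕜 (lp Y p)) (u : Y j) :
    lpFold j φ u ∘L lp.singleContinuousLinearMap 𝕜 Y p j = .id 𝕜 (Y j) := by
  ext y
  rw [ContinuousLinearMap.comp_apply, lp.singleContinuousLinearMap_apply, lpFold_apply,
    lp.single_apply_self, sub_self, map_zero, zero_smul, add_zero, ContinuousLinearMap.id_apply]

end NormedField

theorem norm_lpFold_le_one {𝕜 : Type*} [NontriviallyNormedField 𝕜] [∀ j, NormedSpace 𝕜 (Y j)]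
    (j : J) {φ : StrongDual 𝕜 (lp Y 1)} (hφ : ‖φ‖ ≤ 1) {u : Y j} (hu : ‖u‖ ≤ 1) :
    ‖lpFold j φ u‖ ≤ 1 := by
  refine ContinuousLinearMap.opNorm_le_bound _ zero_le_one fun v => ?_
  calc ‖lpFold j φ u v‖ ≤ ‖v j‖ + ‖φ (v - lp.single 1 j (v j)) • u‖ := norm_add_le _ _
    _ = ‖v j‖ + ‖φ (v - lp.single 1 j (v j))‖ * ‖u‖ := by rw [norm_smul]
    _ ≤ ‖v j‖ + ‖φ (v - lp.single 1 j (v j))‖ := by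
      gcongr
      exact mul_le_of_le_one_right (norm_nonneg _) hu
    _ ≤ ‖v j‖ + 1 * ‖v - lp.single 1 j (v j)‖ := by
      gcongr
      exact φ.le_of_opNorm_le hφ _
    _ = 1 * ‖v‖ := by rw [one_mul, one_mul, ← norm_lp_one_eq_norm_apply_add_norm_sub_single]

theorem norm_lpFold_apply_eq_norm {𝕜 : Type*} [RCLike 𝕜] [∀ j, NormedSpace 𝕜 (Y j)] {j : J}
    {φ : StrongDual 𝕜 (lp Y 1)} {u : Y j} {w : lp Y 1} (hu : ‖u‖ = 1)
    (hwu : w j = (‖w j‖ : 𝕜) • u)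
    (hφw : φ (w - lp.single 1 j (w j)) = ‖w - lp.single 1 j (w j)‖) :
    ‖lpFold j φ u w‖ = ‖w‖ := by
  have fold_eq : lpFold j φ u w = (‖w‖ : 𝕜) • u :=
    calc lpFold j φ u w = (‖w j‖ : 𝕜) • u + (‖w - lp.single 1 j (w j)‖ : 𝕜) • u := by
          rw [lpFold_apply, hφw, ← hwu]
      _ = (‖w‖ : 𝕜) • u := by
          rw [← add_smul, ← RCLike.ofReal_add, ← norm_lp_one_eq_norm_apply_add_norm_sub_single]
  rw [fold_eq, norm_smul, hu, mul_one, RCLike.norm_ofReal, abs_norm]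

theorem exists_contractive_retraction_lp_one (𝕜 : Type*) [RCLike 𝕜] [∀ j, NormedSpace 𝕜 (Y j)]
    (j : J) [Nontrivial (Y j)] (w : lp Y 1) :
    ∃ Q : lp Y 1 →L[𝕜] Y j, ‖Q‖ ≤ 1 ∧
      Q ∘L lp.singleContinuousLinearMap 𝕜 Y 1 j = .id 𝕜 (Y j) ∧ ‖Q w‖ = ‖w‖ := by
  obtain ⟨u, hu, hwu⟩ := exists_norm_eq_one_and_eq_norm_smul 𝕜 (w j)
  obtain ⟨φ, hφ, hφw⟩ := exists_dual_vector'' 𝕜 (w - lp.single 1 j (w j))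
  exact ⟨lpFold j φ u, norm_lpFold_le_one j hφ hu.le, lpFold_comp_single j φ u,
    norm_lpFold_apply_eq_norm hu hwu hφw⟩

end LpFold

theorem normAttaining_dense_of_l1_sum_range_general
    {J : Type*} (X : Type*) (Y : J → Type*)
    [NormedAddCommGroup X] [NormedSpace ℝ X]
    [∀ j, NormedAddCommGroup (Y j)] [∀ j, NormedSpace ℝ (Y j)]
    (h : Dense {T : X →L[ℝ] lp (fun j => Y j) 1 | NormAttaining T}) (j : J) :
    Dense {T : X →L[ℝ] Y j | NormAttaining T} := by
  classical
  rcases subsingleton_or_nontrivial (Y j) with _ | _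
  · obtain ⟨S, hS⟩ := h.nonempty
    have : Nontrivial X := hS.nontrivial
    exact fun T => subset_closure (NormAttaining.of_subsingleton T)
  · exact dense_normAttaining_of_contractive_retractions
      (lp.singleContinuousLinearMap ℝ Y 1 j) (exists_contractive_retraction_lp_one ℝ j) h

/-- If the norm-attaining operators from `X` into the `ℓ₁`-sum `[⊕ⱼ Yⱼ]_{ℓ₁}` are dense in
the space of all bounded operators, then for every `j` the norm-attaining operators from `X`
into `Yⱼ` are dense. -/
theorem normAttaining_dense_of_l1_sum_range
    {J : Type*} (X : Type*) (Y : J → Type*)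
    [NormedAddCommGroup X] [NormedSpace ℝ X] [CompleteSpace X]
    [∀ j, NormedAddCommGroup (Y j)] [∀ j, NormedSpace ℝ (Y j)] [∀ j, CompleteSpace (Y j)]
    (h : Dense {T : X →L[ℝ] lp (fun j => Y j) 1 | NormAttaining T}) :
    ∀ j : J, Dense {T : X →L[ℝ] Y j | NormAttaining T} :=
  normAttaining_dense_of_l1_sum_range_general X Y h
end

section
/- Let X = C([0,1],ℝ) ⊕₁ L¹([0,1],ℝ), the ℓ1-sum of the Banach space of real-valued continuous functions on [0,1] with the supremum norm and the Lebesgue space L¹ of the unit interval, i.e. the product with norm ‖(f,g)‖ = ‖f‖_∞ + ‖g‖₁. Then the set NA(X,X) of norm-attaining bounded linear operators from X to X is not dense in L(X,X). -/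
open MeasureTheory

/-- The Banach space `X = C[0,1] ⊕₁ L₁[0,1]`. -/
noncomputable abbrev XCL : Type :=
  WithLp 1 (C(Set.Icc (0 : ℝ) 1, ℝ) ×
    Lp ℝ 1 ((volume : Measure ℝ).restrict (Set.Icc (0 : ℝ) 1)))

/-!
An operator between the `ℓ¹`-sums that attains its norm and is close to `(g, e) ↦ (T e, 0)` attains
it on the second summand, and collapsing its second component onto the first yields an operator
close to `T` that attains its norm. It therefore suffices to find `T : L¹ → C[0,1]` such that no
operator near `T` attains its norm.

Take `T f t = ∫ f (1 - h t)`, where the kernels `h t`, with values in `(0, 1]`, are obtained in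
stages from the constant `1 / 4`. Every stage prescribes a dyadic interval and moves part of the
mass of the kernel on it to a sparse subset, with a weight oscillating in `t`. The scale of the
oscillation and of the sparse subset gets finer from stage to stage, so that the stages are
martingale differences for the dyadic filtration and `H f t = ∫ f (h t)` is continuous in `t`. The
total weight times length of the stages active at a given `t` is at most `1`, which keeps `h t`
positive almost everywhere.

Let `‖S - T‖ ≤ 1 / 16`, let `t` be dyadic and let `f ≥ 0` vanish off a dyadic interval. Arbitrarily
close to `t` there are points `s` at which the kernel is at least `1 / 2` on a sparse set carrying
nearly the mass `H f t / 4` of `f`. That part of `f` is wasted by `S`, whence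
`S f s ≤ ‖S‖ ‖f‖ - H f t / 32` up to a small error, and continuity of `S f` gives the same bound at
`t`. It extends to all `f ≥ 0` by summation and to all `t` by density. Since `H f t > 0`, and since
`T` being positive makes the negative part of a function useless, `S` does not attain its norm.
-/

section L1Sum

variable {E F G H : Type*} [NormedAddCommGroup E] [NormedSpace ℝ E] [NormedAddCommGroup F]
  [NormedSpace ℝ F] [NormedAddCommGroup G] [NormedSpace ℝ G] [NormedAddCommGroup H]
  [NormedSpace ℝ H]

theorem normAttaining_of_opNorm_mul_norm_le {T : E →L[ℝ] F} {x : E} (hx : x ≠ 0)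
    (h : ‖T‖ * ‖x‖ ≤ ‖T x‖) : NormAttaining T := by
  have hTx : ‖T x‖ = ‖T‖ * ‖x‖ := le_antisymm (T.le_opNorm x) h
  refine ⟨‖x‖⁻¹ • x, norm_smul_inv_norm (𝕜 := ℝ) hx, ?_⟩
  rw [map_smul, norm_smul, norm_inv, norm_norm, hTx]
  field_simp [norm_ne_zero_iff.2 hx]

theorem normAttaining_zero [Nontrivial E] : NormAttaining (0 : E →L[ℝ] F) := by
  obtain ⟨x, hx⟩ := exists_norm_eq E zero_le_one
  exact ⟨x, hx, by simp⟩

-- `A + φ ∘ B` works, where `φ` sends `B g` to `‖B g‖` times the direction of `A g`.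
theorem exists_normAttaining_norm_sub_le {A : E →L[ℝ] F} {B : E →L[ℝ] H} {M : ℝ}
    (hM : ∀ h, ‖A h‖ + ‖B h‖ ≤ M * ‖h‖) {g : E} (hg : M * ‖g‖ ≤ ‖A g‖ + ‖B g‖) (hAg : A g ≠ 0) :
    ∃ A' : E →L[ℝ] F, NormAttaining A' ∧ ∀ h, ‖A' h - A h‖ ≤ ‖B h‖ := by
  obtain ⟨y, hy, hyB⟩ := exists_dual_vector'' ℝ (B g)
  set u : F := ‖A g‖⁻¹ • A g
  have hu : ‖u‖ = 1 := norm_smul_inv_norm (𝕜 := ℝ) hAg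
  have hAu : A g = ‖A g‖ • u := by
    rw [smul_smul, mul_inv_cancel₀ (norm_ne_zero_iff.2 hAg), one_smul]
  have hyu (h : E) : ‖y (B h) • u‖ ≤ ‖B h‖ := by
    rw [norm_smul, hu, mul_one]
    exact y.le_of_opNorm_le_of_le hy le_rfl |>.trans_eq (one_mul _)
  have hg0 : g ≠ 0 := by rintro rfl; exact hAg (map_zero A)
  have hM0 : 0 ≤ M := nonneg_of_mul_nonneg_left
    ((add_nonneg (norm_nonneg _) (norm_nonneg _)).trans (hM g)) (norm_pos_iff.2 hg0)
  refine ⟨A + (y.comp B).smulRight u, normAttaining_of_opNorm_mul_norm_le hg0 ?_, fun h => ?_⟩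
  · calc ‖A + (y.comp B).smulRight u‖ * ‖g‖
        ≤ M * ‖g‖ := by
          refine mul_le_mul_of_nonneg_right ?_ (norm_nonneg g)
          refine ContinuousLinearMap.opNorm_le_bound _ hM0 fun h => ?_
          exact (norm_add_le _ _).trans ((add_le_add_right (hyu h) _).trans (hM h))
      _ ≤ ‖A g‖ + ‖B g‖ := hg
      _ = ‖(‖A g‖ + ‖B g‖) • u‖ := by
          rw [norm_smul, hu, mul_one, Real.norm_of_nonneg (by positivity)]
      _ = ‖(A + (y.comp B).smulRight u) g‖ := by
          rw [add_smul, ← hAu]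
          simp only [add_apply, ContinuousLinearMap.smulRight_apply,
            ContinuousLinearMap.comp_apply, hyB, RCLike.ofReal_real_eq_id, id_eq]
  · simpa using hyu h

/-- The embedding of the second summand into an `ℓ¹`-sum. -/
noncomputable def l1SumInr (G E : Type*) [NormedAddCommGroup G] [NormedSpace ℝ G]
    [NormedAddCommGroup E] [NormedSpace ℝ E] : E →L[ℝ] WithLp 1 (G × E) :=
  (WithLp.prodContinuousLinearEquiv 1 ℝ G E).symm.toContinuousLinearMap ∘L
    ContinuousLinearMap.inr ℝ G E

/-- The operator `(g, e) ↦ (T e, 0)` between `ℓ¹`-sums induced by an operator `T`. -/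
noncomputable def l1SumLift (G H : Type*) [NormedAddCommGroup G] [NormedSpace ℝ G]
    [NormedAddCommGroup H] [NormedSpace ℝ H] (T : E →L[ℝ] F) :
    WithLp 1 (G × E) →L[ℝ] WithLp 1 (F × H) :=
  (WithLp.prodContinuousLinearEquiv 1 ℝ F H).symm.toContinuousLinearMap ∘L
    ContinuousLinearMap.inl ℝ F H ∘L T ∘L WithLp.sndL 1 ℝ G E

theorem l1SumInr_apply (e : E) : l1SumInr G E e = WithLp.toLp 1 (0, e) := rfl

theorem l1SumLift_apply (T : E →L[ℝ] F) (x : WithLp 1 (G × E)) :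
    l1SumLift G H T x = WithLp.toLp 1 (T x.snd, 0) := rfl

theorem norm_l1SumInr (e : E) : ‖l1SumInr G E e‖ = ‖e‖ := WithLp.norm_toLp_snd 1 G E e

theorem norm_sub_add_norm_le_of_l1SumLift {S : WithLp 1 (G × E) →L[ℝ] WithLp 1 (F × H)}
    {T : E →L[ℝ] F} (h : E) :
    ‖(S (l1SumInr G E h)).fst - T h‖ + ‖(S (l1SumInr G E h)).snd‖
      ≤ ‖S - l1SumLift G H T‖ * ‖h‖ := by
  have := (S - l1SumLift G H T).le_opNorm (l1SumInr G E h)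
  rw [norm_l1SumInr, WithLp.prod_norm_eq_of_L1] at this
  simpa [l1SumLift_apply, l1SumInr_apply] using this

theorem fst_eq_zero_of_norm_eq {S : WithLp 1 (G × E) →L[ℝ] WithLp 1 (F × H)} {T : E →L[ℝ] F}
    (hS : ‖S - l1SumLift G H T‖ < ‖S‖) {x : WithLp 1 (G × E)} (hx : ‖S x‖ = ‖S‖ * ‖x‖) :
    x.fst = 0 := by
  have hsplit : x = WithLp.toLp 1 (x.fst, 0) + l1SumInr G E x.snd := by
    rw [l1SumInr_apply, ← WithLp.toLp_add, Prod.mk_add_mk, add_zero, zero_add]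
    rfl
  have hfst : ‖S (WithLp.toLp 1 (x.fst, 0))‖ ≤ ‖S - l1SumLift G H T‖ * ‖x.fst‖ := by
    have := (S - l1SumLift G H T).le_opNorm (WithLp.toLp 1 (x.fst, 0))
    rw [WithLp.norm_toLp_fst] at this
    simpa [l1SumLift_apply, ← Prod.zero_eq_mk] using this
  have hsnd : ‖S (l1SumInr G E x.snd)‖ ≤ ‖S‖ * ‖x.snd‖ :=
    (S.le_opNorm _).trans_eq (by rw [norm_l1SumInr])
  have hle : ‖S‖ * (‖x.fst‖ + ‖x.snd‖) ≤
      ‖S - l1SumLift G H T‖ * ‖x.fst‖ + ‖S‖ * ‖x.snd‖ := by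
    rw [← WithLp.prod_norm_eq_of_L1, ← hx, hsplit, map_add, ← hsplit]
    exact (norm_add_le _ _).trans (add_le_add hfst hsnd)
  by_contra hne
  nlinarith [norm_pos_iff.2 hne]

theorem norm_le_norm_l1SumLift (T : E →L[ℝ] F) : ‖T‖ ≤ ‖l1SumLift G H T‖ :=
  T.opNorm_le_bound (norm_nonneg _) fun h => by
    have := (l1SumLift G H T).le_opNorm (l1SumInr G E h)
    rw [norm_l1SumInr, WithLp.prod_norm_eq_of_L1] at this
    simpa [l1SumLift_apply, l1SumInr_apply] using this

theorem NormAttaining.exists_near_of_near_l1SumLift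
    {S : WithLp 1 (G × E) →L[ℝ] WithLp 1 (F × H)} (hS : NormAttaining S) {T : E →L[ℝ] F}
    (hST : 2 * ‖S - l1SumLift G H T‖ < ‖T‖) :
    ∃ A : E →L[ℝ] F, NormAttaining A ∧ ‖A - T‖ ≤ ‖S - l1SumLift G H T‖ := by
  set δ := ‖S - l1SumLift G H T‖ with hδ
  have hSδ : δ < ‖S‖ := by
    have := norm_sub_norm_le (l1SumLift G H T) S
    rw [norm_sub_rev, ← hδ] at this
    linarith [norm_le_norm_l1SumLift (G := G) (H := H) T]
  obtain ⟨x, hx1, hx⟩ := hS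
  have hxg : x = l1SumInr G E x.snd := by
    have hx0 := fst_eq_zero_of_norm_eq hSδ (by rw [hx, hx1, mul_one])
    rw [l1SumInr_apply, ← hx0]
    rfl
  have hg1 : ‖x.snd‖ = 1 := by rw [← norm_l1SumInr (G := G), ← hxg, hx1]
  set A := WithLp.fstL 1 ℝ F H ∘L S ∘L l1SumInr G E
  set B := WithLp.sndL 1 ℝ F H ∘L S ∘L l1SumInr G E
  have hAB (h : E) : ‖A h‖ + ‖B h‖ = ‖S (l1SumInr G E h)‖ := (WithLp.prod_norm_eq_of_L1 _).symm
  have hABT (h : E) : ‖A h - T h‖ + ‖B h‖ ≤ δ * ‖h‖ := norm_sub_add_norm_le_of_l1SumLift h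
  have hSg : ‖A x.snd‖ + ‖B x.snd‖ = ‖S‖ := by rw [hAB, ← hxg, hx]
  have hAg : A x.snd ≠ 0 := by
    intro h0
    have := hABT x.snd
    rw [h0, norm_zero, zero_add] at hSg
    rw [hg1, hSg] at this
    linarith [norm_nonneg (A x.snd - T x.snd)]
  obtain ⟨A', hA', hA'A⟩ := exists_normAttaining_norm_sub_le (M := ‖S‖)
    (fun h => by rw [hAB, ← norm_l1SumInr (G := G) h]; exact S.le_opNorm _)
    (by rw [hSg, hg1, mul_one]) hAg
  refine ⟨A', hA', ContinuousLinearMap.opNorm_le_bound _ (norm_nonneg _) fun h => ?_⟩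
  calc ‖A' h - T h‖ ≤ ‖A' h - A h‖ + ‖A h - T h‖ := norm_sub_le_norm_sub_add_norm_sub _ _ _
    _ ≤ δ * ‖h‖ := by linarith [hA'A h, hABT h]

theorem not_dense_normAttaining_l1Sum [Nontrivial E]
    (h : ¬ Dense {T : E →L[ℝ] F | NormAttaining T}) :
    ¬ Dense {T : WithLp 1 (G × E) →L[ℝ] WithLp 1 (F × H) | NormAttaining T} := by
  contrapose! h
  rw [Metric.dense_iff]
  intro T ε hε
  obtain rfl | hT := eq_or_ne T 0
  · exact ⟨0, Metric.mem_ball_self hε, normAttaining_zero⟩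
  obtain ⟨S, hST, hS⟩ := Metric.dense_iff.1 h (l1SumLift G H T) (min ε (‖T‖ / 2))
    (lt_min hε (half_pos (norm_pos_iff.2 hT)))
  rw [Metric.mem_ball, dist_eq_norm, lt_min_iff] at hST
  obtain ⟨A, hA, hAT⟩ := hS.exists_near_of_near_l1SumLift (by linarith [hST.2])
  exact ⟨A, by rw [Metric.mem_ball, dist_eq_norm]; exact hAT.trans_lt hST.1, hA⟩

end L1Sum

section Cutoff

variable {α E : Type*} [MeasurableSpace α] [NormedAddCommGroup E] {μ : Measure α} {p : ENNReal}

/-- The class of `A.indicator f`, for `f` in an `Lᵖ` space and `A` measurable. -/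
noncomputable def cutoff {A : Set α} (hA : MeasurableSet A) (f : Lp E p μ) : Lp E p μ :=
  ((Lp.memLp f).indicator hA).toLp

theorem coeFn_cutoff {A : Set α} (hA : MeasurableSet A) (f : Lp E p μ) :
    cutoff hA f =ᵐ[μ] A.indicator f :=
  MemLp.coeFn_toLp _

theorem cutoff_add_cutoff_compl {A : Set α} (hA : MeasurableSet A) (f : Lp E p μ) :
    cutoff hA f + cutoff hA.compl f = f := by
  refine Lp.ext ?_
  filter_upwards [Lp.coeFn_add (cutoff hA f) (cutoff hA.compl f), coeFn_cutoff hA f,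
    coeFn_cutoff hA.compl f] with x hadd hx hxc
  rw [hadd, Pi.add_apply, hx, hxc, Set.indicator_self_add_compl_apply]

theorem sum_cutoff_preimage_singleton {φ : α → ℕ} (hφ : Measurable φ) {s : Finset ℕ}
    (hs : ∀ᵐ x ∂μ, φ x ∈ s) (f : Lp E p μ) :
    ∑ i ∈ s, cutoff (hφ (measurableSet_singleton i)) f = f := by
  refine Lp.ext ?_
  have hcut : ∀ᵐ x ∂μ, ∀ i, cutoff (hφ (measurableSet_singleton i)) f x =
      (φ ⁻¹' {i}).indicator f x := ae_all_iff.2 fun i => coeFn_cutoff _ f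
  classical
  filter_upwards [Lp.coeFn_fun_finsetSum s fun i => cutoff (hφ (measurableSet_singleton i)) f,
    hcut, hs] with x hsum hx hxs
  simp only [hsum, hx, Set.indicator_apply, Set.mem_preimage, Set.mem_singleton_iff,
    Finset.sum_ite_eq, if_pos hxs]

theorem cutoff_nonneg {A : Set α} (hA : MeasurableSet A) {f : Lp ℝ p μ} (hf : 0 ≤ f) :
    0 ≤ cutoff hA f := by
  rw [← Lp.coeFn_nonneg] at hf ⊢
  filter_upwards [coeFn_cutoff hA f, hf] with x hx hfx
  rw [hx]
  exact Set.indicator_apply_nonneg fun _ => hfx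

theorem norm_eq_integral_of_nonneg {f : Lp ℝ 1 μ} (hf : 0 ≤ f) : ‖f‖ = ∫ x, f x ∂μ := by
  rw [L1.norm_eq_integral_norm]
  refine integral_congr_ae ?_
  filter_upwards [(Lp.coeFn_nonneg f).2 hf] with x hx
  exact Real.norm_of_nonneg hx

theorem norm_add_of_nonneg {f g : Lp ℝ 1 μ} (hf : 0 ≤ f) (hg : 0 ≤ g) :
    ‖f + g‖ = ‖f‖ + ‖g‖ := by
  rw [norm_eq_integral_of_nonneg hf, norm_eq_integral_of_nonneg hg,
    norm_eq_integral_of_nonneg (add_nonneg hf hg), ← integral_add (L1.integrable_coeFn f)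
      (L1.integrable_coeFn g)]
  exact integral_congr_ae (Lp.coeFn_add f g)

end Cutoff

section KernelOperator

variable {α X : Type*} [MeasurableSpace α] {μ : Measure α}
  [TopologicalSpace X] [FirstCountableTopology X] [CompactSpace X]

theorem integrable_mul_of_abs_le {f K : α → ℝ} {C : ℝ} (hf : Integrable f μ) (hK : Measurable K)
    (hKC : ∀ x, |K x| ≤ C) : Integrable (fun x => f x * K x) μ :=
  hf.mul_bdd hK.aestronglyMeasurable (.of_forall hKC)

theorem abs_integral_mul_le {f : Lp ℝ 1 μ} {K : α → ℝ} {C : ℝ} (hK : ∀ x, |K x| ≤ C) :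
    |∫ x, f x * K x ∂μ| ≤ C * ‖f‖ := by
  rw [← Real.norm_eq_abs, L1.norm_eq_integral_norm f, mul_comm, ← integral_mul_const C]
  refine norm_integral_le_of_norm_le ((L1.integrable_coeFn f).norm.mul_const C)
    (.of_forall fun x => ?_)
  rw [norm_mul]
  exact mul_le_mul_of_nonneg_left (hK x) (norm_nonneg _)

/-- The integral operator from `L¹` to the continuous functions with the bounded kernel `K`, which
is separately measurable and continuous. -/
noncomputable def kernelOperator (K : X → α → ℝ) (C : ℝ) (hcont : ∀ x, Continuous fun t => K t x)
    (hmeas : ∀ t, Measurable (K t)) (hbound : ∀ t x, |K t x| ≤ C) : Lp ℝ 1 μ →L[ℝ] C(X, ℝ) :=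
  LinearMap.mkContinuous
    { toFun f :=
        { toFun := fun t => ∫ x, f x * K t x ∂μ
          continuous_toFun := continuous_of_dominated (bound := fun x => |f x| * C)
            (fun t => (Lp.aestronglyMeasurable f).mul (hmeas t).aestronglyMeasurable)
            (fun t => .of_forall fun x => by
              rw [norm_mul]
              exact mul_le_mul_of_nonneg_left (hbound t x) (norm_nonneg _))
            ((L1.integrable_coeFn f).abs.mul_const C)
            (.of_forall fun x => continuous_const.mul (hcont x)) }
      map_add' f g := by
        ext t
        refine Eq.trans (integral_congr_ae ?_) (integral_add
          (integrable_mul_of_abs_le (L1.integrable_coeFn f) (hmeas t) (hbound t))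
          (integrable_mul_of_abs_le (L1.integrable_coeFn g) (hmeas t) (hbound t)))
        filter_upwards [Lp.coeFn_add f g] with x hx
        rw [hx, Pi.add_apply, add_mul]
      map_smul' c f := by
        ext t
        refine Eq.trans (integral_congr_ae ?_) (integral_const_mul c fun x => f x * K t x)
        filter_upwards [Lp.coeFn_smul c f] with x hx
        rw [hx, Pi.smul_apply, smul_eq_mul, mul_assoc] }
    |C| fun f => (ContinuousMap.norm_le _ (by positivity)).2 fun t =>
      abs_integral_mul_le fun x => (hbound t x).trans (le_abs_self C)

end KernelOperator

section Dyadic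

/-- The index `i` of the dyadic interval `[i / 2 ^ m, (i + 1) / 2 ^ m)` containing `x ≥ 0`. -/
noncomputable def dyadicIndex (m : ℕ) (x : ℝ) : ℕ := ⌊2 ^ m * x⌋₊

theorem dyadicIndex_eq_div (m d : ℕ) (x : ℝ) :
    dyadicIndex m x = dyadicIndex (m + d) x / 2 ^ d := by
  rw [dyadicIndex, dyadicIndex, ← Nat.floor_div_natCast]
  congr 1
  push_cast
  rw [pow_add]
  field_simp

theorem measurable_dyadicIndex (m : ℕ) : Measurable (dyadicIndex m) :=
  Nat.measurable_floor.comp (measurable_id.const_mul _)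

theorem dyadicIndex_le_of_mem_Icc (m : ℕ) {x : ℝ} (hx : x ∈ Set.Icc (0 : ℝ) 1) :
    dyadicIndex m x ≤ 2 ^ m := by
  refine Nat.floor_le_of_le ?_
  push_cast
  exact mul_le_of_le_one_right (by positivity) hx.2

theorem abs_sub_dyadicIndex_div_le (m : ℕ) {x : ℝ} (hx : 0 ≤ x) :
    |x - dyadicIndex m x / 2 ^ m| ≤ (1 / 2) ^ m := by
  have hpow : (0 : ℝ) < 2 ^ m := by positivity
  have hfloor := Nat.floor_le (a := 2 ^ m * x) (by positivity)
  have hlt := Nat.lt_floor_add_one (2 ^ m * x)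
  have hdiv : x - dyadicIndex m x / 2 ^ m = (2 ^ m * x - ⌊2 ^ m * x⌋₊) / 2 ^ m := by
    rw [dyadicIndex]
    field_simp
  rw [hdiv, one_div_pow, abs_of_nonneg (div_nonneg (by linarith) hpow.le)]
  gcongr
  linarith

theorem dyadicIndex_eq_of_mem_Ioo {m i : ℕ} {x : ℝ}
    (hx : x ∈ Set.Ioo ((i : ℝ) / 2 ^ m) ((i + 1 : ℕ) / 2 ^ m)) : dyadicIndex m x = i := by
  obtain ⟨h1, h2⟩ := hx
  rw [div_lt_iff₀' (by positivity)] at h1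
  rw [lt_div_iff₀' (by positivity)] at h2
  push_cast at h2
  exact (Nat.floor_eq_iff (i.cast_nonneg.trans h1.le)).2 ⟨h1.le, h2⟩

/-- The dyadic interval of level `l` and index `i`. -/
def dyadicCell (l i : ℕ) : Set ℝ := dyadicIndex l ⁻¹' {i}

/-- The set consisting of the first of the `2 ^ q` dyadic subintervals of level `m + q` of every
dyadic interval of level `m`. -/
def sparseSet (m q : ℕ) : Set ℝ := dyadicIndex (m + q) ⁻¹' {i | 2 ^ q ∣ i}

theorem measurableSet_sparseSet (m q : ℕ) : MeasurableSet (sparseSet m q) :=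
  measurable_dyadicIndex (m + q) .of_discrete

/-- A dyadic step function of level `m`: a function constant on every dyadic interval of level
`m`. -/
def IsDyadicStep (m : ℕ) (s : ℝ → ℝ) : Prop := s.FactorsThrough (dyadicIndex m)

namespace IsDyadicStep

variable {m m' : ℕ} {s : ℝ → ℝ}

theorem const (m : ℕ) (c : ℝ) : IsDyadicStep m fun _ => c := fun _ _ _ => rfl

theorem indicator_preimage (m : ℕ) (A : Set ℕ) :
    IsDyadicStep m ((dyadicIndex m ⁻¹' A).indicator 1) := fun _ _ hxy =>
  congrArg (A.indicator (1 : ℕ → ℝ)) hxy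

theorem exists_eq_comp (hs : IsDyadicStep m s) : ∃ F : ℕ → ℝ, s = F ∘ dyadicIndex m :=
  (Function.factorsThrough_iff s).1 hs

theorem mono (hs : IsDyadicStep m s) (hm : m ≤ m') : IsDyadicStep m' s := fun x y hxy => by
  obtain ⟨d, rfl⟩ := Nat.exists_eq_add_of_le hm
  exact hs (by rw [dyadicIndex_eq_div m d, dyadicIndex_eq_div m d, hxy])

theorem measurable (hs : IsDyadicStep m s) : Measurable s := by
  obtain ⟨F, rfl⟩ := hs.exists_eq_comp
  exact measurable_from_nat.comp (measurable_dyadicIndex m)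

end IsDyadicStep

/-- Lebesgue measure on `[0, 1]`, as a measure on the line. -/
noncomputable abbrev unitMeasure : Measure ℝ := (volume : Measure ℝ).restrict (Set.Icc 0 1)

instance : IsProbabilityMeasure unitMeasure := ⟨by simp⟩

theorem IsDyadicStep.integrable {m : ℕ} {s : ℝ → ℝ} (hs : IsDyadicStep m s) :
    Integrable s unitMeasure := by
  have hmeas := hs.measurable
  obtain ⟨F, rfl⟩ := hs.exists_eq_comp
  refine .of_bound hmeas.aestronglyMeasurable (∑ i ∈ Finset.range (2 ^ m + 1), |F i|) ?_
  filter_upwards [ae_restrict_mem measurableSet_Icc] with x hx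
  refine Finset.single_le_sum (f := fun i => |F i|) (fun i _ => abs_nonneg _) ?_
  exact Finset.mem_range_succ_iff.2 (dyadicIndex_le_of_mem_Icc m hx)

theorem integral_comp_dyadicIndex (m : ℕ) (F : ℕ → ℝ) :
    ∫ x, F (dyadicIndex m x) ∂unitMeasure = (∑ i ∈ Finset.range (2 ^ m), F i) / 2 ^ m := by
  have hle (i : ℕ) : (i : ℝ) / 2 ^ m ≤ (i + 1 : ℕ) / 2 ^ m := by gcongr; simp
  have hconst (i : ℕ) : Set.EqOn (fun x => F (dyadicIndex m x)) (fun _ => F i)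
      (Set.Ioo ((i : ℝ) / 2 ^ m) ((i + 1 : ℕ) / 2 ^ m)) :=
    fun x hx => by simp only [dyadicIndex_eq_of_mem_Ioo hx]
  have hcell (i : ℕ) :
      ∫ x in ((i : ℝ) / 2 ^ m)..((i + 1 : ℕ) / 2 ^ m), F (dyadicIndex m x) = F i / 2 ^ m := by
    rw [intervalIntegral.integral_of_le (hle i), integral_Ioc_eq_integral_Ioo,
      setIntegral_congr_fun measurableSet_Ioo (hconst i), setIntegral_const,
      Real.volume_real_Ioo_of_le (hle i), smul_eq_mul]
    push_cast
    ring
  have hsum := intervalIntegral.sum_integral_adjacent_intervals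
    (f := fun x => F (dyadicIndex m x)) (μ := volume) (a := fun i : ℕ => (i : ℝ) / 2 ^ m)
    (n := 2 ^ m) fun i _ => by
      rw [intervalIntegrable_iff_integrableOn_Ioo_of_le (hle i)]
      exact (integrableOn_congr_fun (hconst i) measurableSet_Ioo).2 (integrableOn_const (by simp))
  simp only [hcell] at hsum
  rw [← Finset.sum_div] at hsum
  rw [hsum, integral_Icc_eq_integral_Ioc, ← intervalIntegral.integral_of_le zero_le_one]
  simp

theorem integral_indicator_dyadicCell_le (l i : ℕ) :
    ∫ x, (dyadicCell l i).indicator (1 : ℝ → ℝ) x ∂unitMeasure ≤ 1 / 2 ^ l := by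
  refine (integral_comp_dyadicIndex l (({i} : Set ℕ).indicator (1 : ℕ → ℝ))).trans_le ?_
  gcongr
  simp only [Set.indicator_apply, Set.mem_singleton_iff, Pi.one_apply, Finset.sum_ite_eq']
  split_ifs <;> norm_num

theorem sum_range_mul_indicator_dvd (F : ℕ → ℝ) (a : ℕ) {b : ℕ} (hb : 0 < b) :
    ∑ i ∈ Finset.range (a * b), F (i / b) * (b * {j | b ∣ j}.indicator 1 i - 1) = 0 := by
  induction a with
  | zero => simp
  | succ a ih =>
    rw [Nat.succ_mul, Finset.sum_range_add, ih, zero_add]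
    have hblock : ∀ j ∈ Finset.range b,
        F ((a * b + j) / b) * (b * {j | b ∣ j}.indicator 1 (a * b + j) - 1) =
          F a * (b * (if j = 0 then 1 else 0) - 1) := by
      intro j hj
      have hjb := Finset.mem_range.1 hj
      have hdiv : (a * b + j) / b = a := by
        rw [mul_comm, Nat.mul_add_div hb, Nat.div_eq_of_lt hjb, add_zero]
      have hdvd : b ∣ a * b + j ↔ j = 0 := by
        rw [Nat.dvd_add_right (dvd_mul_left b a)]
        exact ⟨fun h => Nat.eq_zero_of_dvd_of_lt h hjb, fun h => h ▸ dvd_zero b⟩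
      simp only [hdiv, Set.indicator_apply, Set.mem_ofPred_eq, hdvd, Pi.one_apply]
    rw [Finset.sum_congr rfl hblock, ← Finset.mul_sum, Finset.sum_sub_distrib, ← Finset.mul_sum]
    simp [hb]

theorem IsDyadicStep.integral_mul_sparseSet_eq_zero {m : ℕ} (q : ℕ) {s : ℝ → ℝ}
    (hs : IsDyadicStep m s) :
    ∫ x, s x * (2 ^ q * (sparseSet m q).indicator 1 x - 1) ∂unitMeasure = 0 := by
  obtain ⟨F, rfl⟩ := hs.exists_eq_comp
  set F' : ℕ → ℝ := fun i => F (i / 2 ^ q) * ((2 ^ q : ℕ) * {j | 2 ^ q ∣ j}.indicator 1 i - 1)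
  have hfactor (x : ℝ) :
      (F ∘ dyadicIndex m) x * (2 ^ q * (sparseSet m q).indicator 1 x - 1) =
        F' (dyadicIndex (m + q) x) := by
    simp only [F', Function.comp_apply, dyadicIndex_eq_div m q, Nat.cast_pow, Nat.cast_ofNat]
    rfl
  rw [integral_congr_ae (.of_forall hfactor), integral_comp_dyadicIndex, pow_add,
    sum_range_mul_indicator_dvd F _ (by positivity), zero_div]

theorem exists_isDyadicStep_integral_sub_le {γ : ℝ → ℝ} (hγ : Integrable γ unitMeasure) {ε : ℝ}
    (hε : 0 < ε) : ∃ m s, IsDyadicStep m s ∧ ∫ x, |γ x - s x| ∂unitMeasure ≤ ε := by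
  obtain ⟨g, hgsupp, hγg, hgcont, hgint⟩ :=
    hγ.exists_hasCompactSupport_integral_sub_le (half_pos hε)
  obtain ⟨η, hη, hgη⟩ := Metric.uniformContinuous_iff.1
    (hgcont.uniformContinuous_of_tendsto_cocompact hgsupp.is_zero_at_infty) (ε / 2) (half_pos hε)
  obtain ⟨m, hm⟩ := exists_pow_lt_of_lt_one hη one_half_lt_one
  set s : ℝ → ℝ := fun x => g (dyadicIndex m x / 2 ^ m)
  have hs : IsDyadicStep m s := fun x y hxy => by simp only [s, hxy]
  have hgs : ∀ᵐ x ∂unitMeasure, |g x - s x| ≤ ε / 2 := by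
    filter_upwards [ae_restrict_mem measurableSet_Icc] with x hx
    exact (hgη ((abs_sub_dyadicIndex_div_le m hx.1).trans_lt hm)).le
  refine ⟨m, s, hs, ?_⟩
  calc ∫ x, |γ x - s x| ∂unitMeasure
      ≤ ∫ x, (|γ x - g x| + ε / 2) ∂unitMeasure := by
        refine integral_mono_ae (hγ.sub hs.integrable).abs
          ((hγ.sub hgint).abs.add (integrable_const _)) ?_
        filter_upwards [hgs] with x hx
        exact (abs_sub_le _ (g x) _).trans (add_le_add_right hx _)
    _ = ∫ x, |γ x - g x| ∂unitMeasure + ε / 2 :=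
        (integral_add (hγ.sub hgint).abs (integrable_const _)).trans (by simp)
    _ ≤ ε := by linarith [show ∫ x, |γ x - g x| ∂unitMeasure ≤ ε / 2 from hγg]

theorem exists_forall_abs_integral_mul_le {γ : ℝ → ℝ} (hγ : Integrable γ unitMeasure) (C : ℝ)
    {δ : ℝ} (hδ : 0 < δ) :
    ∃ m₀, ∀ m ≥ m₀, ∀ G : ℝ → ℝ, Measurable G → (∀ x, |G x| ≤ C) →
      (∀ s, IsDyadicStep m s → ∫ x, s x * G x ∂unitMeasure = 0) →
      |∫ x, γ x * G x ∂unitMeasure| ≤ δ := by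
  obtain ⟨m₀, s, hs, hγs⟩ :=
    exists_isDyadicStep_integral_sub_le hγ (ε := δ / (|C| + 1)) (by positivity)
  refine ⟨m₀, fun m hm G hG hGC horth => ?_⟩
  have hsub : ∫ x, γ x * G x ∂unitMeasure = ∫ x, (γ x - s x) * G x ∂unitMeasure := by
    simp_rw [sub_mul]
    rw [integral_sub (integrable_mul_of_abs_le hγ hG hGC)
      (integrable_mul_of_abs_le hs.integrable hG hGC), horth s (hs.mono hm), sub_zero]
  have hint := hγ.sub hs.integrable
  calc |∫ x, γ x * G x ∂unitMeasure|
      ≤ ∫ x, |(γ x - s x) * G x| ∂unitMeasure := hsub ▸ abs_integral_le_integral_abs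
    _ ≤ ∫ x, |γ x - s x| * (|C| + 1) ∂unitMeasure := by
        refine integral_mono (integrable_mul_of_abs_le hint hG hGC).abs (hint.abs.mul_const _)
          fun x => ?_
        rw [abs_mul]
        exact mul_le_mul_of_nonneg_left (by linarith [hGC x, le_abs_self C]) (abs_nonneg _)
    _ ≤ δ / (|C| + 1) * (|C| + 1) := by rw [integral_mul_const]; gcongr
    _ = δ := by field_simp

end Dyadic

section Kernel

/-- The dyadic level prescribed at stage `k`. Together, `stageLevel`, `stageIndex` and `stageDepth`
enumerate all triples of natural numbers, each of them infinitely often. -/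
def stageLevel (k : ℕ) : ℕ := k.unpair.1.unpair.1

/-- The index of the dyadic interval prescribed at stage `k`. -/
def stageIndex (k : ℕ) : ℕ := k.unpair.1.unpair.2.unpair.1

/-- The sparsity prescribed at stage `k`. -/
def stageDepth (k : ℕ) : ℕ := k.unpair.1.unpair.2.unpair.2

theorem stageLevel_le (k : ℕ) : stageLevel k ≤ k :=
  (Nat.unpair_left_le _).trans (Nat.unpair_left_le _)

theorem stageDepth_le (k : ℕ) : stageDepth k ≤ k :=
  (Nat.unpair_right_le _).trans ((Nat.unpair_right_le _).trans (Nat.unpair_left_le _))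

theorem exists_stage_ge (l i q n : ℕ) :
    ∃ k ≥ n, stageLevel k = l ∧ stageIndex k = i ∧ stageDepth k = q :=
  ⟨Nat.pair (Nat.pair l (Nat.pair i q)) n, Nat.right_le_pair _ _, by
    simp [stageLevel, stageIndex, stageDepth]⟩

/-- A `2⁻ᵏ`-periodic bump with values in `[0, 1]`: it vanishes at the dyadic points of level `k`,
equals `1` half-way between them, and vanishes at distance at most `2⁻ᵏ / 4` from them. -/
noncomputable def dyadicWave (k : ℕ) (t : ℝ) : ℝ := max 0 (-Real.cos (2 * Real.pi * (2 ^ k * t)))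

theorem continuous_dyadicWave (k : ℕ) : Continuous (dyadicWave k) := by
  unfold dyadicWave
  fun_prop

theorem dyadicWave_nonneg (k : ℕ) (t : ℝ) : 0 ≤ dyadicWave k t := le_max_left _ _

theorem dyadicWave_le_one (k : ℕ) (t : ℝ) : dyadicWave k t ≤ 1 :=
  max_le zero_le_one (by linarith [Real.neg_one_le_cos (2 * Real.pi * (2 ^ k * t))])

theorem dyadicWave_natCast_div_add {k k₀ : ℕ} (h : k₀ ≤ k) (n : ℕ) (s : ℝ) :
    dyadicWave k (n / 2 ^ k₀ + s) = dyadicWave k s := by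
  obtain ⟨d, rfl⟩ := Nat.exists_eq_add_of_le h
  have hphase : 2 * Real.pi * (2 ^ (k₀ + d) * (n / 2 ^ k₀ + s)) =
      2 * Real.pi * (2 ^ (k₀ + d) * s) + (2 ^ d * n : ℕ) * (2 * Real.pi) := by
    push_cast
    rw [pow_add]
    field_simp
    ring
  rw [dyadicWave, hphase, Real.cos_add_nat_mul_two_pi, dyadicWave]

theorem dyadicWave_natCast_div {k k₀ : ℕ} (h : k₀ ≤ k) (n : ℕ) :
    dyadicWave k (n / 2 ^ k₀) = 0 := by
  rw [← add_zero (_ / _), dyadicWave_natCast_div_add h]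
  simp [dyadicWave]

theorem dyadicWave_add_half_pow_self {k k₀ : ℕ} (h : k₀ ≤ k) (n : ℕ) :
    dyadicWave k (n / 2 ^ k₀ + 1 / 2 ^ (k + 1)) = 1 := by
  have hphase : 2 * Real.pi * (2 ^ k * (1 / 2 ^ (k + 1))) = Real.pi := by
    rw [pow_succ]
    field_simp
  rw [dyadicWave_natCast_div_add h, dyadicWave, hphase]
  simp

theorem dyadicWave_add_half_pow_of_ne {j k k₀ : ℕ} (h : k₀ ≤ j) (hjk : j ≠ k) (n : ℕ) :
    dyadicWave j (n / 2 ^ k₀ + 1 / 2 ^ (k + 1)) = 0 := by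
  rw [dyadicWave_natCast_div_add h]
  rcases hjk.lt_or_gt with hlt | hgt
  · obtain ⟨d, rfl⟩ := Nat.exists_eq_add_of_lt hlt
    have hphase : 2 * Real.pi * (2 ^ j * (1 / 2 ^ (j + d + 1 + 1))) =
        Real.pi / 2 * (1 / 2 ^ d) := by
      simp only [pow_add]
      field_simp
    have hle : (1 : ℝ) / 2 ^ d ≤ 1 := by
      rw [div_le_one (by positivity)]
      exact one_le_pow₀ one_le_two
    have hnonneg : 0 ≤ Real.pi / 2 * (1 / 2 ^ d) := by positivity
    rw [dyadicWave, hphase, max_eq_left]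
    exact neg_nonpos.2 (Real.cos_nonneg_of_neg_pi_div_two_le_of_le (by linarith [Real.pi_pos])
      (mul_le_of_le_one_right (by positivity) hle))
  · exact_mod_cast dyadicWave_natCast_div (Nat.succ_le_of_lt hgt) 1

/-- The part, at time `t` and before stage `k`, of an initial budget of `1`, if stage `j` costs its
weight times the length of its dyadic interval. -/
noncomputable def stageBudget : ℕ → ℝ → ℝ
  | 0, _ => 1
  | k + 1, t => stageBudget k t -
      dyadicWave k t * min 1 (2 ^ stageLevel k * stageBudget k t / 2) / 2 ^ stageLevel k

/-- The weight at time `t` of stage `k`: the wave, reduced so that at most half of the remaining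
budget is spent. -/
noncomputable def stageWeight (k : ℕ) (t : ℝ) : ℝ :=
  dyadicWave k t * min 1 (2 ^ stageLevel k * stageBudget k t / 2)

theorem stageBudget_succ (k : ℕ) (t : ℝ) :
    stageBudget (k + 1) t = stageBudget k t - stageWeight k t / 2 ^ stageLevel k := rfl

theorem stageBudget_pos (k : ℕ) (t : ℝ) : 0 < stageBudget k t := by
  induction k with
  | zero => exact zero_lt_one
  | succ k ih =>
    have hmin : min 1 (2 ^ stageLevel k * stageBudget k t / 2) / 2 ^ stageLevel k
        ≤ stageBudget k t / 2 := by
      rw [div_le_iff₀ (by positivity)]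
      exact (min_le_right _ _).trans (by linarith)
    have hcost : stageWeight k t / 2 ^ stageLevel k ≤ stageBudget k t / 2 := by
      rw [stageWeight, mul_div_assoc]
      exact (mul_le_of_le_one_left (by positivity) (dyadicWave_le_one k t)).trans hmin
    rw [stageBudget_succ]
    linarith

theorem stageWeight_nonneg (k : ℕ) (t : ℝ) : 0 ≤ stageWeight k t :=
  mul_nonneg (dyadicWave_nonneg k t) (by have := stageBudget_pos k t; positivity)

theorem stageWeight_le_one (k : ℕ) (t : ℝ) : stageWeight k t ≤ 1 :=
  mul_le_one₀ (dyadicWave_le_one k t) (by have := stageBudget_pos k t; positivity)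
    (min_le_left _ _)

theorem continuous_stageBudget (k : ℕ) : Continuous (stageBudget k) := by
  induction k with
  | zero => exact continuous_const
  | succ k ih =>
    have := continuous_dyadicWave k
    simp only [funext (stageBudget_succ k), stageWeight]
    fun_prop

theorem continuous_stageWeight (k : ℕ) : Continuous (stageWeight k) := by
  have := continuous_dyadicWave k
  have := continuous_stageBudget k
  unfold stageWeight
  fun_prop

theorem sum_stageWeight_div (k : ℕ) (t : ℝ) :
    ∑ j ∈ Finset.range k, stageWeight j t / 2 ^ stageLevel j = 1 - stageBudget k t := by
  induction k with
  | zero => simp [stageBudget]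
  | succ k ih =>
    rw [Finset.sum_range_succ, ih, stageBudget_succ]
    ring

/-- The new value at a point of a kernel with old value `g`. With `d` the indicator function of a
sparse set filling the proportion `2 ^ (-q)` of an interval on which `g` and `w` are constant, this
moves mass to the sparse set and preserves the average. -/
noncomputable def concentrate (q : ℕ) (w d g : ℝ) : ℝ :=
  g + w * (2 ^ q * d - 1) * min (g / 2) ((1 - g) / 2 ^ q)

section Concentrate

variable {q : ℕ} {w d g : ℝ}

theorem mul_one_sub_half_le_concentrate (hw : 0 ≤ w) (hd : 0 ≤ d) (hg : 0 ≤ g) (hg1 : g ≤ 1) :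
    g * (1 - w / 2) ≤ concentrate q w d g := by
  set h := min (g / 2) ((1 - g) / 2 ^ q)
  have hh : h ≤ g / 2 := min_le_left _ _
  have hh0 : 0 ≤ h := le_min (by linarith) (div_nonneg (by linarith) (by positivity))
  have hgain : 0 ≤ w * (2 ^ q * d) * h :=
    mul_nonneg (mul_nonneg hw (mul_nonneg (by positivity) hd)) hh0
  have hloss : w * h ≤ w * (g / 2) := by gcongr
  rw [concentrate]
  linarith

theorem concentrate_le_one (hw : 0 ≤ w) (hw1 : w ≤ 1) (hd1 : d ≤ 1) (hg : 0 ≤ g) (hg1 : g ≤ 1) :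
    concentrate q w d g ≤ 1 := by
  set h := min (g / 2) ((1 - g) / 2 ^ q)
  have hh : 2 ^ q * h ≤ 1 - g := by
    rw [← le_div_iff₀' (by positivity)]
    exact min_le_right _ _
  have hh0 : 0 ≤ h := le_min (by linarith) (div_nonneg (by linarith) (by positivity))
  have hfactor : 2 ^ q * d - 1 ≤ 2 ^ q := by
    linarith [mul_le_of_le_one_right (show (0 : ℝ) ≤ 2 ^ q by positivity) hd1]
  have hgain : w * (2 ^ q * d - 1) * h ≤ w * 2 ^ q * h :=
    mul_le_mul_of_nonneg_right (mul_le_mul_of_nonneg_left hfactor hw) hh0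
  rw [concentrate]
  nlinarith [mul_le_mul_of_nonneg_left hh hw]

theorem half_le_concentrate_one_one (hq : 1 ≤ q) (hg : 1 / 2 ^ q ≤ g) :
    1 / 2 ≤ concentrate q 1 1 g := by
  have hpow : (2 : ℝ) ≤ 2 ^ q := le_self_pow₀ one_le_two (by omega)
  have hg0 : 0 ≤ g := le_trans (by positivity) hg
  rw [div_le_iff₀ (by positivity)] at hg
  rw [concentrate, one_mul, mul_one]
  rcases min_cases (g / 2) ((1 - g) / 2 ^ q) with ⟨h, -⟩ | ⟨h, -⟩
  · rw [h]
    nlinarith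
  · have hrest : (1 - g) / 2 ^ q ≤ 1 / 2 := by
      rw [div_le_iff₀ (by positivity)]
      linarith
    calc (1 : ℝ) / 2 ≤ 1 - (1 - g) / 2 ^ q := by linarith
      _ = g + (2 ^ q - 1) * min (g / 2) ((1 - g) / 2 ^ q) := by
        rw [h]
        field_simp
        ring

end Concentrate

/-- The kernel at time `t` before stage `k`. Stage `k` concentrates the mass of the prescribed
dyadic interval on a sparse subset, at the scale `k ^ 2` on which the kernel is already constant. -/
noncomputable def stageKernel : ℕ → ℝ → ℝ → ℝ
  | 0, _, _ => 1 / 4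
  | k + 1, t, x => concentrate (stageDepth k)
      (stageWeight k t * (dyadicCell (stageLevel k) (stageIndex k)).indicator 1 x)
      ((sparseSet (k ^ 2) (stageDepth k)).indicator 1 x) (stageKernel k t x)

theorem indicator_one_mem_Icc {α : Type*} (A : Set α) (x : α) :
    A.indicator (1 : α → ℝ) x ∈ Set.Icc (0 : ℝ) 1 := by
  by_cases hx : x ∈ A <;> simp [hx]

theorem stageWeight_mul_indicator_mem_Icc (k : ℕ) (t : ℝ) (A : Set ℝ) (x : ℝ) :
    stageWeight k t * A.indicator 1 x ∈ Set.Icc (0 : ℝ) 1 :=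
  have hA := indicator_one_mem_Icc A x
  ⟨mul_nonneg (stageWeight_nonneg k t) hA.1, mul_le_one₀ (stageWeight_le_one k t) hA.1 hA.2⟩

theorem stageKernel_mem_Ioc (k : ℕ) (t x : ℝ) : stageKernel k t x ∈ Set.Ioc (0 : ℝ) 1 := by
  induction k with
  | zero => norm_num [stageKernel]
  | succ k ih =>
    have hw := stageWeight_mul_indicator_mem_Icc k t (dyadicCell (stageLevel k) (stageIndex k)) x
    have hd := indicator_one_mem_Icc (sparseSet (k ^ 2) (stageDepth k)) x
    exact ⟨(mul_pos ih.1 (by linarith [hw.2])).trans_le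
      (mul_one_sub_half_le_concentrate hw.1 hd.1 ih.1.le ih.2),
      concentrate_le_one hw.1 hw.2 hd.2 ih.1.le ih.2⟩

theorem stageKernel_nonneg (k : ℕ) (t x : ℝ) : 0 ≤ stageKernel k t x :=
  (stageKernel_mem_Ioc k t x).1.le

theorem stageKernel_le_one (k : ℕ) (t x : ℝ) : stageKernel k t x ≤ 1 :=
  (stageKernel_mem_Ioc k t x).2

theorem abs_stageKernel_le_one (k : ℕ) (t x : ℝ) : |stageKernel k t x| ≤ 1 := by
  rw [abs_of_nonneg (stageKernel_nonneg k t x)]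
  exact stageKernel_le_one k t x

theorem exp_neg_le_one_sub_half {a : ℝ} (ha : 0 ≤ a) (ha1 : a ≤ 1) :
    Real.exp (-a) ≤ 1 - a / 2 := by
  rw [Real.exp_neg]
  refine inv_le_of_inv_le₀ (by linarith) ?_
  refine le_trans ?_ (Real.add_one_le_exp a)
  rw [inv_le_iff_one_le_mul₀ (by linarith)]
  nlinarith

theorem exp_neg_sum_le_stageKernel (k : ℕ) (t x : ℝ) :
    1 / 4 * Real.exp (-∑ j ∈ Finset.range k,
      stageWeight j t * (dyadicCell (stageLevel j) (stageIndex j)).indicator 1 x)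
      ≤ stageKernel k t x := by
  induction k with
  | zero => simp [stageKernel]
  | succ k ih =>
    have hw := stageWeight_mul_indicator_mem_Icc k t (dyadicCell (stageLevel k) (stageIndex k)) x
    rw [Finset.sum_range_succ, neg_add, Real.exp_add, ← mul_assoc]
    exact (mul_le_mul ih (exp_neg_le_one_sub_half hw.1 hw.2) (Real.exp_nonneg _)
      (stageKernel_nonneg k t x)).trans (mul_one_sub_half_le_concentrate hw.1
        (indicator_one_mem_Icc _ x).1 (stageKernel_nonneg k t x) (stageKernel_le_one k t x))

theorem continuous_stageKernel (k : ℕ) (x : ℝ) : Continuous fun t => stageKernel k t x := by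
  induction k with
  | zero => exact continuous_const
  | succ k ih =>
    have := continuous_stageWeight k
    simp only [stageKernel, concentrate]
    fun_prop

theorem isDyadicStep_stageKernel (k : ℕ) (t : ℝ) : IsDyadicStep (k ^ 2) (stageKernel k t) := by
  induction k with
  | zero => exact .const _ _
  | succ k ih =>
    have hl := stageLevel_le k
    have hq := stageDepth_le k
    have hcell : IsDyadicStep ((k + 1) ^ 2)
        ((dyadicCell (stageLevel k) (stageIndex k)).indicator 1) :=
      (IsDyadicStep.indicator_preimage _ _).mono (by nlinarith)
    have hsparse : IsDyadicStep ((k + 1) ^ 2) ((sparseSet (k ^ 2) (stageDepth k)).indicator 1) :=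
      (IsDyadicStep.indicator_preimage _ _).mono (by nlinarith)
    have hkernel : IsDyadicStep ((k + 1) ^ 2) (stageKernel k t) := ih.mono (by nlinarith)
    exact fun x y hxy => by simp only [stageKernel, hcell hxy, hsparse hxy, hkernel hxy]

theorem stageBudget_eq_of_dyadicWave_eq_zero {k₀ k : ℕ} {t : ℝ} (hk : k₀ ≤ k)
    (h : ∀ j, k₀ ≤ j → j < k → dyadicWave j t = 0) : stageBudget k t = stageBudget k₀ t := by
  induction k, hk using Nat.le_induction with
  | base => rfl
  | succ k hk ih =>
    rw [stageBudget_succ, stageWeight, h k hk k.lt_succ_self, zero_mul, zero_div, sub_zero]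
    exact ih fun j hj hjk => h j hj (hjk.trans k.lt_succ_self)

theorem stageKernel_eq_of_dyadicWave_eq_zero {k₀ k : ℕ} {t : ℝ} (hk : k₀ ≤ k)
    (h : ∀ j, k₀ ≤ j → j < k → dyadicWave j t = 0) : stageKernel k t = stageKernel k₀ t := by
  induction k, hk using Nat.le_induction with
  | base => rfl
  | succ k hk ih =>
    ext x
    rw [stageKernel, stageWeight, h k hk k.lt_succ_self,
      ih fun j hj hjk => h j hj (hjk.trans k.lt_succ_self)]
    simp [concentrate]

end Kernel

section ConcentrationOperator

open Filter Topology

variable {f : Lp ℝ 1 unitMeasure} {t : Set.Icc (0 : ℝ) 1}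

theorem measurable_stageKernel (k : ℕ) (t : ℝ) : Measurable (stageKernel k t) :=
  (isDyadicStep_stageKernel k t).measurable

theorem integrable_mul_stageKernel {γ : ℝ → ℝ} (hγ : Integrable γ unitMeasure) (k : ℕ) (t : ℝ) :
    Integrable (fun x => γ x * stageKernel k t x) unitMeasure :=
  integrable_mul_of_abs_le hγ (measurable_stageKernel k t) (abs_stageKernel_le_one k t)

theorem IsDyadicStep.integral_mul_stageKernel_eq {k j : ℕ} {s : ℝ → ℝ}
    (hs : IsDyadicStep (k ^ 2) s) (hkj : k ≤ j) (t : ℝ) :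
    ∫ x, s x * stageKernel j t x ∂unitMeasure = ∫ x, s x * stageKernel k t x ∂unitMeasure := by
  induction j, hkj using Nat.le_induction with
  | base => rfl
  | succ j hj ih =>
    rw [← ih, ← sub_eq_zero, ← integral_sub (integrable_mul_stageKernel hs.integrable (j + 1) t)
      (integrable_mul_stageKernel hs.integrable j t)]
    have hsj : IsDyadicStep (j ^ 2) s := hs.mono (Nat.pow_le_pow_left hj 2)
    have hcell : IsDyadicStep (j ^ 2)
        ((dyadicCell (stageLevel j) (stageIndex j)).indicator 1) :=
      (IsDyadicStep.indicator_preimage _ _).mono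
        ((stageLevel_le j).trans (Nat.le_self_pow two_ne_zero j))
    have hcoeff : IsDyadicStep (j ^ 2) fun x => s x *
        (stageWeight j t * (dyadicCell (stageLevel j) (stageIndex j)).indicator 1 x *
          min (stageKernel j t x / 2) ((1 - stageKernel j t x) / 2 ^ stageDepth j)) :=
      fun x y hxy => by simp only [hsj hxy, hcell hxy, isDyadicStep_stageKernel j t hxy]
    rw [← hcoeff.integral_mul_sparseSet_eq_zero (stageDepth j)]
    congr 1 with x
    rw [stageKernel, concentrate]
    ring

/-- The integral operator with kernel `stageKernel k`. -/
noncomputable def stageOperator (k : ℕ) : Lp ℝ 1 unitMeasure →L[ℝ] C(Set.Icc (0 : ℝ) 1, ℝ) :=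
  kernelOperator (fun t x => stageKernel k t x) 1
    (fun x => (continuous_stageKernel k x).comp continuous_subtype_val)
    (fun t => measurable_stageKernel k t) fun t => abs_stageKernel_le_one k t

theorem cauchySeq_stageOperator (f : Lp ℝ 1 unitMeasure) :
    CauchySeq fun k => stageOperator k f := by
  refine Metric.cauchySeq_iff'.2 fun ε hε => ?_
  have hf := L1.integrable_coeFn f
  obtain ⟨m₀, hm₀⟩ := exists_forall_abs_integral_mul_le hf 1 (half_pos hε)
  refine ⟨m₀, fun k hk => lt_of_le_of_lt ?_ (half_lt_self hε)⟩
  refine (ContinuousMap.dist_le (half_pos hε).le).2 fun t => ?_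
  have hdiff : dist (stageOperator k f t) (stageOperator m₀ f t) =
      |∫ x, f x * (stageKernel k t x - stageKernel m₀ t x) ∂unitMeasure| := by
    simp_rw [mul_sub]
    rw [integral_sub (integrable_mul_stageKernel hf k t) (integrable_mul_stageKernel hf m₀ t)]
    rfl
  rw [hdiff]
  refine hm₀ (m₀ ^ 2) (Nat.le_self_pow two_ne_zero m₀) _
    ((measurable_stageKernel k t).sub (measurable_stageKernel m₀ t)) (fun x => ?_) fun s hs => ?_
  · have := stageKernel_mem_Ioc k t x
    have := stageKernel_mem_Ioc m₀ t x
    grind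
  · simp_rw [mul_sub]
    rw [integral_sub (integrable_mul_stageKernel hs.integrable k t)
      (integrable_mul_stageKernel hs.integrable m₀ t), hs.integral_mul_stageKernel_eq hk, sub_self]

/-- The strong limit of the operators `stageOperator k`. -/
noncomputable def concentrationOperator :
    Lp ℝ 1 unitMeasure →L[ℝ] C(Set.Icc (0 : ℝ) 1, ℝ) :=
  continuousLinearMapOfTendsto stageOperator
    (tendsto_pi_nhds.2 fun f => (cauchySeq_stageOperator f).tendsto_limUnder)

theorem tendsto_integral_mul_stageKernel (f : Lp ℝ 1 unitMeasure) (t : Set.Icc (0 : ℝ) 1) :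
    Tendsto (fun k => ∫ x, f x * stageKernel k t x ∂unitMeasure) atTop
      (𝓝 (concentrationOperator f t)) :=
  ((continuous_eval_const t).tendsto _).comp (cauchySeq_stageOperator f).tendsto_limUnder

theorem concentrationOperator_eq_integral {k₀ : ℕ} (ht : ∀ j ≥ k₀, dyadicWave j t = 0)
    (f : Lp ℝ 1 unitMeasure) :
    concentrationOperator f t = ∫ x, f x * stageKernel k₀ t x ∂unitMeasure := by
  refine tendsto_nhds_unique (tendsto_integral_mul_stageKernel f t)
    (tendsto_const_nhds.congr' ?_)
  filter_upwards [eventually_ge_atTop k₀] with k hk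
  rw [stageKernel_eq_of_dyadicWave_eq_zero hk fun j hj _ => ht j hj]

theorem concentrationOperator_le_norm (f : Lp ℝ 1 unitMeasure) (t : Set.Icc (0 : ℝ) 1) :
    concentrationOperator f t ≤ ‖f‖ := by
  refine le_of_tendsto' (tendsto_integral_mul_stageKernel f t) fun k => ?_
  rw [← one_mul ‖f‖]
  exact (le_abs_self _).trans (abs_integral_mul_le (abs_stageKernel_le_one k t))

theorem summable_stageWeight_div (t : ℝ) :
    Summable fun k => stageWeight k t / 2 ^ stageLevel k := by
  refine summable_of_sum_range_le (c := 1)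
    (fun k => div_nonneg (stageWeight_nonneg k t) (by positivity)) fun k => ?_
  rw [sum_stageWeight_div]
  linarith [stageBudget_pos k t]

theorem ae_summable_stageWeight_mul_indicator (t : ℝ) :
    ∀ᵐ x ∂unitMeasure, Summable fun k =>
      stageWeight k t * (dyadicCell (stageLevel k) (stageIndex k)).indicator 1 x := by
  set F : ℕ → ℝ → ℝ := fun k x =>
    stageWeight k t * (dyadicCell (stageLevel k) (stageIndex k)).indicator 1 x
  have hF0 (k : ℕ) (x : ℝ) : 0 ≤ F k x := (stageWeight_mul_indicator_mem_Icc k t _ x).1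
  have hFint (k : ℕ) : Integrable (F k) unitMeasure :=
    (IsDyadicStep.indicator_preimage _ _).integrable.const_mul _
  have hnorm (k : ℕ) :
      eLpNorm (F k) 1 unitMeasure ≤ .ofReal (stageWeight k t / 2 ^ stageLevel k) := by
    rw [eLpNorm_one_eq_lintegral_enorm, ← ofReal_integral_norm_eq_lintegral_enorm (hFint k)]
    simp only [Real.norm_of_nonneg (hF0 k _), F]
    rw [integral_const_mul, div_eq_mul_one_div]
    gcongr
    · exact stageWeight_nonneg k t
    · exact integral_indicator_dyadicCell_le _ _
  refine (summable_norm_of_tsum_eLpNorm_ne_top le_rfl (fun k => (hFint k).1) ?_).mono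
    fun x hx => hx.of_norm
  exact ne_top_of_le_ne_top (summable_stageWeight_div t).tsum_ofReal_ne_top
    (ENNReal.tsum_le_tsum hnorm)

theorem exists_measurable_pos_le_stageKernel (t : ℝ) :
    ∃ P : ℝ → ℝ, Measurable P ∧ (∀ x, 0 < P x) ∧
      ∀ᵐ x ∂unitMeasure, ∀ k, P x ≤ stageKernel k t x := by
  refine ⟨fun x => 1 / 4 * Real.exp (-∑' k,
    stageWeight k t * (dyadicCell (stageLevel k) (stageIndex k)).indicator 1 x), ?_,
    fun x => by positivity, ?_⟩
  · refine (Measurable.exp ?_).const_mul _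
    exact (Measurable.tsum fun k =>
      ((IsDyadicStep.indicator_preimage _ _).measurable.const_mul _)).neg
  · filter_upwards [ae_summable_stageWeight_mul_indicator t] with x hx k
    refine le_trans ?_ (exp_neg_sum_le_stageKernel k t x)
    gcongr
    exact hx.sum_le_tsum _ fun j _ => (stageWeight_mul_indicator_mem_Icc j t _ x).1

theorem concentrationOperator_pos (hf : 0 ≤ f) (hf0 : f ≠ 0) (t : Set.Icc (0 : ℝ) 1) :
    0 < concentrationOperator f t := by
  obtain ⟨P, hP, hPpos, hPle⟩ := exists_measurable_pos_le_stageKernel t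
  have hf' := (Lp.coeFn_nonneg f).2 hf
  have hPbound : ∀ᵐ x ∂unitMeasure, ‖P x‖ ≤ 1 := by
    filter_upwards [hPle] with x hx
    rw [Real.norm_of_nonneg (hPpos x).le]
    exact (hx 0).trans (stageKernel_le_one 0 t x)
  have hint : Integrable (fun x => f x * P x) unitMeasure :=
    (L1.integrable_coeFn f).mul_bdd hP.aestronglyMeasurable hPbound
  have hnonneg : 0 ≤ᵐ[unitMeasure] fun x => f x * P x := by
    filter_upwards [hf'] with x hx using mul_nonneg hx (hPpos x).le
  have hpos : 0 < ∫ x, f x * P x ∂unitMeasure := by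
    refine (integral_nonneg_of_ae hnonneg).lt_of_ne' fun hzero => hf0 ?_
    refine (Lp.eq_zero_iff_ae_eq_zero).2 ?_
    filter_upwards [(integral_eq_zero_iff_of_nonneg_ae hnonneg hint).1 hzero] with x hx
    exact (mul_eq_zero_iff_right (hPpos x).ne').1 hx
  refine hpos.trans_le (ge_of_tendsto' (tendsto_integral_mul_stageKernel f t) fun k => ?_)
  refine integral_mono_ae hint (integrable_mul_stageKernel (L1.integrable_coeFn f) k t) ?_
  filter_upwards [hf', hPle] with x hfx hx
  exact mul_le_mul_of_nonneg_left (hx k) hfx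

end ConcentrationOperator

section Drop

open Filter Topology

variable {f : Lp ℝ 1 unitMeasure} {t : Set.Icc (0 : ℝ) 1}

theorem dyadicIndex_natCast_div (m i : ℕ) : dyadicIndex m (i / 2 ^ m) = i := by
  rw [dyadicIndex, mul_div_cancel₀ _ (by positivity), Nat.floor_natCast]

theorem IsDyadicStep.eq_of_mem_dyadicCell {m i : ℕ} {s : ℝ → ℝ} (hs : IsDyadicStep m s) {x : ℝ}
    (hx : x ∈ dyadicCell m i) : s x = s (i / 2 ^ m) :=
  hs (hx.trans (dyadicIndex_natCast_div m i).symm)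

theorem exists_one_div_two_pow_near {g : ℝ} (hg : 0 < g) (hg1 : g ≤ 1) :
    ∃ q : ℕ, 1 ≤ q ∧ 1 / 2 ^ q < g ∧ g / 4 ≤ 1 / 2 ^ q := by
  obtain ⟨n, hn, hn'⟩ := exists_nat_pow_near_of_lt_one (half_pos hg) (by linarith)
    (one_half_pos (α := ℝ)) one_half_lt_one
  rw [pow_succ, one_div_pow] at hn
  rw [one_div_pow] at hn'
  refine ⟨n + 1, by omega, ?_, ?_⟩ <;> rw [pow_succ, ← one_div_mul_one_div] <;> linarith

theorem eventually_le_norm_cutoff_sparseSet (hf : 0 ≤ f) (q : ℕ) {δ : ℝ} (hδ : 0 < δ) :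
    ∀ᶠ k : ℕ in atTop, ‖f‖ / 2 ^ q - δ ≤ ‖cutoff (measurableSet_sparseSet (k ^ 2) q) f‖ := by
  have hf' := L1.integrable_coeFn f
  have hpow : (1 : ℝ) ≤ 2 ^ q := one_le_pow₀ one_le_two
  obtain ⟨m₀, hm₀⟩ := exists_forall_abs_integral_mul_le hf' (2 ^ q) hδ
  filter_upwards [eventually_ge_atTop m₀] with k hk
  have hD (x : ℝ) := indicator_one_mem_Icc (sparseSet (k ^ 2) q) x
  have hDmeas : Measurable ((sparseSet (k ^ 2) q).indicator (1 : ℝ → ℝ)) :=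
    measurable_one.indicator (measurableSet_sparseSet _ _)
  have hsmall := hm₀ (k ^ 2) (hk.trans (Nat.le_self_pow two_ne_zero k))
    (fun x => 2 ^ q * (sparseSet (k ^ 2) q).indicator 1 x - 1) ((hDmeas.const_mul _).sub_const 1)
    (fun x => abs_le.2 (by constructor <;> nlinarith [(hD x).1, (hD x).2]))
    fun s hs => hs.integral_mul_sparseSet_eq_zero q
  have hcut : ‖cutoff (measurableSet_sparseSet (k ^ 2) q) f‖ =
      ∫ x, f x * (sparseSet (k ^ 2) q).indicator 1 x ∂unitMeasure := by
    rw [norm_eq_integral_of_nonneg (cutoff_nonneg _ hf)]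
    refine integral_congr_ae ?_
    filter_upwards [coeFn_cutoff (measurableSet_sparseSet (k ^ 2) q) f] with x hx
    rw [hx]
    by_cases hxD : x ∈ sparseSet (k ^ 2) q <;> simp [hxD]
  have hsplit : ∫ x, f x * (2 ^ q * (sparseSet (k ^ 2) q).indicator 1 x - 1) ∂unitMeasure =
      2 ^ q * ‖cutoff (measurableSet_sparseSet (k ^ 2) q) f‖ - ‖f‖ := by
    simp_rw [mul_sub, mul_left_comm _ ((2 : ℝ) ^ q), mul_one]
    rw [hcut, norm_eq_integral_of_nonneg hf, integral_sub _ hf', integral_const_mul]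
    exact (integrable_mul_of_abs_le hf' hDmeas fun x =>
      abs_le.2 ⟨by linarith [(hD x).1], (hD x).2⟩).const_mul _
  rw [hsplit, abs_le] at hsmall
  rw [sub_le_iff_le_add, div_le_iff₀ (by positivity)]
  nlinarith

theorem half_le_stageKernel_succ {k₀ k n : ℕ} (hk : k₀ ≤ k) {s x : ℝ}
    (hs : s = n / 2 ^ k₀ + 1 / 2 ^ (k + 1)) (hbudget : 2 / 2 ^ stageLevel k ≤ stageBudget k₀ s)
    (hq : 1 ≤ stageDepth k) (hx : x ∈ dyadicCell (stageLevel k) (stageIndex k))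
    (hxD : x ∈ sparseSet (k ^ 2) (stageDepth k)) (hg : 1 / 2 ^ stageDepth k ≤ stageKernel k₀ s x) :
    1 / 2 ≤ stageKernel (k + 1) s x := by
  have hvanish (j : ℕ) (hj : k₀ ≤ j) (hjk : j < k) : dyadicWave j s = 0 :=
    hs ▸ dyadicWave_add_half_pow_of_ne hj hjk.ne n
  have hweight : stageWeight k s = 1 := by
    rw [stageWeight, stageBudget_eq_of_dyadicWave_eq_zero hk hvanish, min_eq_left, mul_one, hs,
      dyadicWave_add_half_pow_self hk]
    rw [div_le_iff₀ (by positivity)] at hbudget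
    linarith
  rw [stageKernel, hweight, stageKernel_eq_of_dyadicWave_eq_zero hk hvanish,
    Set.indicator_of_mem hx, Set.indicator_of_mem hxD, Pi.one_apply, mul_one]
  exact half_le_concentrate_one_one hq hg

theorem mul_norm_le_concentrationOperator (hf : 0 ≤ f) {k : ℕ} {c : ℝ}
    (ht : ∀ j ≥ k, dyadicWave j t = 0)
    (hc : ∀ᵐ x ∂unitMeasure, f x ≠ 0 → c ≤ stageKernel k t x) :
    c * ‖f‖ ≤ concentrationOperator f t := by
  have hf' := L1.integrable_coeFn f
  rw [concentrationOperator_eq_integral ht, norm_eq_integral_of_nonneg hf, ← integral_const_mul]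
  refine integral_mono_ae (hf'.const_mul c) (integrable_mul_stageKernel hf' k t) ?_
  filter_upwards [hc, (Lp.coeFn_nonneg f).2 hf] with x hx hfx
  by_cases hx0 : f x = 0
  · simp [hx0]
  · simp only [mul_comm c]
    exact mul_le_mul_of_nonneg_left (hx hx0) hfx

theorem concentrationOperator_eq_mul_norm {k₀ n l i : ℕ} (ht : (t : ℝ) = n / 2 ^ k₀)
    (hl : k₀ ^ 2 ≤ l) (hf : 0 ≤ f) (hcell : ∀ᵐ x ∂unitMeasure, f x ≠ 0 → x ∈ dyadicCell l i) :
    concentrationOperator f t = stageKernel k₀ t (i / 2 ^ l) * ‖f‖ := by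
  rw [concentrationOperator_eq_integral (k₀ := k₀) fun j hj => ht ▸ dyadicWave_natCast_div hj n,
    norm_eq_integral_of_nonneg hf, mul_comm, ← integral_mul_const]
  refine integral_congr_ae ?_
  filter_upwards [hcell] with x hx
  by_cases hx0 : f x = 0
  · simp [hx0]
  · rw [((isDyadicStep_stageKernel k₀ t).mono hl).eq_of_mem_dyadicCell (hx hx0)]

/-- The points `t + 2 ^ (-(k + 1))`, projected to `[0, 1]`. -/
noncomputable def rightApprox (t : Set.Icc (0 : ℝ) 1) (k : ℕ) : Set.Icc (0 : ℝ) 1 :=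
  Set.projIcc 0 1 zero_le_one (t + 1 / 2 ^ (k + 1))

theorem tendsto_rightApprox (t : Set.Icc (0 : ℝ) 1) :
    Tendsto (rightApprox t) atTop (𝓝 t) := by
  have hpow : Tendsto (fun k : ℕ => (t : ℝ) + 1 / 2 ^ (k + 1)) atTop (𝓝 (t + 0)) := by
    refine tendsto_const_nhds.add ?_
    simp_rw [← one_div_pow]
    exact (tendsto_pow_atTop_nhds_zero_of_lt_one (by norm_num) one_half_lt_one).comp
      (tendsto_add_atTop_nat 1)
  have hproj := (continuous_projIcc (h := zero_le_one (α := ℝ))).tendsto (t + 0 : ℝ)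
  rw [add_zero, Set.projIcc_val] at hproj
  rw [add_zero] at hpow
  exact hproj.comp hpow

theorem coe_rightApprox {k₀ k n : ℕ} (ht : (t : ℝ) = n / 2 ^ k₀) (ht1 : (t : ℝ) < 1)
    (hk : k₀ ≤ k) : (rightApprox t k : ℝ) = n / 2 ^ k₀ + 1 / 2 ^ (k + 1) := by
  have hgap : (t : ℝ) + 1 / 2 ^ k₀ ≤ 1 := by
    rw [ht, ← add_div, div_le_one (by positivity)]
    rw [ht, div_lt_one (by positivity)] at ht1
    exact_mod_cast ht1
  have hstep : (1 : ℝ) / 2 ^ (k + 1) ≤ 1 / 2 ^ k₀ := by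
    gcongr
    · exact one_le_two
    · omega
  have hmem : (t : ℝ) + 1 / 2 ^ (k + 1) ∈ Set.Icc (0 : ℝ) 1 :=
    ⟨add_nonneg t.2.1 (by positivity), by linarith⟩
  rw [rightApprox, Set.projIcc_of_mem _ hmem, ← ht]

theorem frequently_half_norm_cutoff_le {k₀ n l i : ℕ} (ht : (t : ℝ) = n / 2 ^ k₀)
    (ht1 : (t : ℝ) < 1) (hl : k₀ ^ 2 ≤ l) (hbudget : 2 / 2 ^ l < stageBudget k₀ t) (hf : 0 ≤ f)
    (hcell : ∀ᵐ x ∂unitMeasure, f x ≠ 0 → x ∈ dyadicCell l i) {δ : ℝ} (hδ : 0 < δ) :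
    ∃ᶠ s in 𝓝 t, ∃ (D : Set ℝ) (hD : MeasurableSet D),
      1 / 2 * ‖cutoff hD f‖ ≤ concentrationOperator (cutoff hD f) s ∧
        concentrationOperator f t / 4 - δ ≤ ‖cutoff hD f‖ := by
  have hg := stageKernel_mem_Ioc k₀ t (i / 2 ^ l)
  obtain ⟨q, hq, hqg, hgq⟩ := exists_one_div_two_pow_near hg.1 hg.2
  have hbudget' : ∀ᶠ k in atTop, 2 / 2 ^ l < stageBudget k₀ (rightApprox t k) :=
    (tendsto_rightApprox t).eventually
      (((continuous_stageBudget k₀).comp continuous_subtype_val).tendsto t |>.eventually_const_lt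
        hbudget)
  have hkernel : ∀ᶠ k in atTop, 1 / 2 ^ q < stageKernel k₀ (rightApprox t k) (i / 2 ^ l) :=
    (tendsto_rightApprox t).eventually
      (((continuous_stageKernel k₀ _).comp continuous_subtype_val).tendsto t |>.eventually_const_lt
        hqg)
  have hstage : ∃ᶠ k in atTop, stageLevel k = l ∧ stageIndex k = i ∧ stageDepth k = q :=
    frequently_atTop.2 fun N => exists_stage_ge l i q N
  refine (tendsto_rightApprox t).frequently ?_
  refine (hstage.and_eventually (hbudget'.and (hkernel.and ((eventually_ge_atTop k₀).and
    (eventually_le_norm_cutoff_sparseSet hf q hδ))))).mono ?_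
  rintro k ⟨⟨rfl, rfl, rfl⟩, hb, hg', hk, hcut⟩
  have hs := coe_rightApprox ht ht1 hk
  refine ⟨_, measurableSet_sparseSet _ _, mul_norm_le_concentrationOperator (k := k + 1)
    (cutoff_nonneg _ hf) (fun j hj => hs ▸ dyadicWave_add_half_pow_of_ne (by omega) (by omega) n)
    ?_, le_trans ?_ hcut⟩
  · filter_upwards [coeFn_cutoff (measurableSet_sparseSet (k ^ 2) (stageDepth k)) f, hcell]
      with x hcutx hfx hx
    rw [hcutx, Set.indicator_apply_ne_zero] at hx
    refine half_le_stageKernel_succ hk hs hb.le hq (hfx hx.2) hx.1 ?_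
    rw [((isDyadicStep_stageKernel k₀ _).mono hl).eq_of_mem_dyadicCell (hfx hx.2)]
    exact hg'.le
  · rw [concentrationOperator_eq_mul_norm ht hl hf hcell]
    have := mul_le_mul_of_nonneg_right hgq (norm_nonneg f)
    linarith [one_div_mul_eq_div ((2 : ℝ) ^ stageDepth k) ‖f‖]

end Drop

section ContinuousMap

variable {E X : Type*} [NormedAddCommGroup E] [NormedSpace ℝ E] [TopologicalSpace X]
  [CompactSpace X]

theorem apply_le_opNorm_mul_norm (S : E →L[ℝ] C(X, ℝ)) (f : E) (t : X) : S f t ≤ ‖S‖ * ‖f‖ :=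
  (le_abs_self _).trans (((S f).norm_coe_le_norm t).trans (S.le_opNorm f))

theorem exists_abs_apply_eq_norm [Nonempty X] (g : C(X, ℝ)) : ∃ t, |g t| = ‖g‖ := by
  obtain ⟨t, -, ht⟩ := isCompact_univ.exists_isMaxOn Set.univ_nonempty g.continuous.abs.continuousOn
  exact ⟨t, le_antisymm (g.norm_coe_le_norm t)
    ((ContinuousMap.norm_le _ (abs_nonneg _)).2 fun s => ht (Set.mem_univ s))⟩

end ContinuousMap

section Perturbation

open Filter Topology

variable {S : Lp ℝ 1 unitMeasure →L[ℝ] C(Set.Icc (0 : ℝ) 1, ℝ)} {f : Lp ℝ 1 unitMeasure}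
  {t : Set.Icc (0 : ℝ) 1}

/-- The operator `f ↦ ∫ f - concentrationOperator f`, near which no operator attains its norm. -/
noncomputable def deficitOperator : Lp ℝ 1 unitMeasure →L[ℝ] C(Set.Icc (0 : ℝ) 1, ℝ) :=
  L1.integralCLM.smulRight 1 - concentrationOperator

theorem deficitOperator_apply (f : Lp ℝ 1 unitMeasure) (t : Set.Icc (0 : ℝ) 1) :
    deficitOperator f t = ∫ x, f x ∂unitMeasure - concentrationOperator f t := by
  rw [← L1.integral_eq_integral, L1.integral_eq]
  simp [deficitOperator]

theorem deficitOperator_apply_of_nonneg (hf : 0 ≤ f) (t : Set.Icc (0 : ℝ) 1) :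
    deficitOperator f t = ‖f‖ - concentrationOperator f t := by
  rw [deficitOperator_apply, norm_eq_integral_of_nonneg hf]

theorem abs_apply_sub_deficitOperator_le (hS : ‖S - deficitOperator‖ ≤ 1 / 16)
    (f : Lp ℝ 1 unitMeasure) (t : Set.Icc (0 : ℝ) 1) :
    |S f t - deficitOperator f t| ≤ 1 / 16 * ‖f‖ :=
  ((S f - deficitOperator f).norm_coe_le_norm t).trans ((S - deficitOperator).le_of_opNorm_le hS f)

theorem eleven_sixteenths_le_opNorm (hS : ‖S - deficitOperator‖ ≤ 1 / 16) : 11 / 16 ≤ ‖S‖ := by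
  set one : Lp ℝ 1 unitMeasure := Lp.const 1 unitMeasure 1
  have hnorm : ‖one‖ = 1 := by simp [one, Lp.norm_const]
  have hnonneg : 0 ≤ one := by
    rw [← Lp.coeFn_nonneg]
    filter_upwards [Lp.coeFn_const 1 unitMeasure (1 : ℝ)] with x hx
    exact zero_le_one.trans_eq hx.symm
  have hconc : concentrationOperator one 0 = 1 / 4 := by
    rw [concentrationOperator_eq_integral (k₀ := 0) fun j hj => by
        simpa using dyadicWave_natCast_div hj 0]
    simp only [stageKernel]
    rw [integral_mul_const, ← norm_eq_integral_of_nonneg hnonneg, hnorm, one_mul]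
  have hnear := abs_le.1 (abs_apply_sub_deficitOperator_le hS one 0)
  have hle := apply_le_opNorm_mul_norm S one 0
  rw [deficitOperator_apply_of_nonneg hnonneg, hconc] at hnear
  rw [hnorm] at hnear hle
  linarith

theorem apply_le_sub_norm_cutoff_div (hS : ‖S - deficitOperator‖ ≤ 1 / 16) (hf : 0 ≤ f) {D : Set ℝ}
    (hD : MeasurableSet D) (h : 1 / 2 * ‖cutoff hD f‖ ≤ concentrationOperator (cutoff hD f) t) :
    S f t ≤ ‖S‖ * ‖f‖ - ‖cutoff hD f‖ / 8 := by
  have hsplit : S f t = S (cutoff hD f) t + S (cutoff hD.compl f) t := by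
    rw [← ContinuousMap.add_apply, ← map_add, cutoff_add_cutoff_compl]
  have hnorm : ‖f‖ = ‖cutoff hD f‖ + ‖cutoff hD.compl f‖ := by
    rw [← norm_add_of_nonneg (cutoff_nonneg _ hf) (cutoff_nonneg _ hf), cutoff_add_cutoff_compl]
  have hnear := (abs_le.1 (abs_apply_sub_deficitOperator_le hS (cutoff hD f) t)).2
  rw [deficitOperator_apply_of_nonneg (cutoff_nonneg _ hf)] at hnear
  have hcompl := apply_le_opNorm_mul_norm S (cutoff hD.compl f) t
  have hM := mul_le_mul_of_nonneg_right (eleven_sixteenths_le_opNorm hS)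
    (norm_nonneg (cutoff hD f))
  rw [hsplit, hnorm]
  linarith

theorem apply_add_le_of_mem_dyadicCell (hS : ‖S - deficitOperator‖ ≤ 1 / 16) {k₀ n l i : ℕ}
    (ht : (t : ℝ) = n / 2 ^ k₀) (ht1 : (t : ℝ) < 1) (hl : k₀ ^ 2 ≤ l)
    (hbudget : 2 / 2 ^ l < stageBudget k₀ t) (hf : 0 ≤ f)
    (hcell : ∀ᵐ x ∂unitMeasure, f x ≠ 0 → x ∈ dyadicCell l i) :
    S f t + 1 / 32 * concentrationOperator f t ≤ ‖S‖ * ‖f‖ := by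
  refine le_of_forall_pos_le_add fun δ hδ => ?_
  have hlim : Tendsto (fun s => S f s) (𝓝 t) (𝓝 (S f t)) := (S f).continuous.tendsto t
  have hfreq : ∃ᶠ s in 𝓝 t, S f s ≤ ‖S‖ * ‖f‖ - (concentrationOperator f t / 4 - δ) / 8 := by
    refine (frequently_half_norm_cutoff_le ht ht1 hl hbudget hf hcell hδ).mono ?_
    rintro s ⟨D, hD, hconc, hcut⟩
    linarith [apply_le_sub_norm_cutoff_div hS hf hD hconc]
  linarith [le_of_tendsto_of_frequently hlim hfreq]

theorem apply_add_le_of_eq_div (hS : ‖S - deficitOperator‖ ≤ 1 / 16) {k₀ n : ℕ}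
    (ht : (t : ℝ) = n / 2 ^ k₀) (ht1 : (t : ℝ) < 1) (hf : 0 ≤ f) :
    S f t + 1 / 32 * concentrationOperator f t ≤ ‖S‖ * ‖f‖ := by
  obtain ⟨m, hm⟩ := exists_pow_lt_of_lt_one (half_pos (stageBudget_pos k₀ t)) one_half_lt_one
  set l := max m (k₀ ^ 2)
  have hbudget : 2 / 2 ^ l < stageBudget k₀ t := by
    have hml : (1 / 2 : ℝ) ^ l ≤ (1 / 2) ^ m :=
      pow_le_pow_of_le_one (by norm_num) (by norm_num) (le_max_left _ _)
    rw [one_div_pow, one_div_pow] at hml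
    rw [one_div_pow] at hm
    linarith [mul_one_div (2 : ℝ) (2 ^ l)]
  set Φ : Lp ℝ 1 unitMeasure →L[ℝ] ℝ := ‖S‖ • L1.integralCLM -
    (ContinuousMap.evalCLM ℝ t).comp (S + (1 / 32 : ℝ) • concentrationOperator)
  have hΦ {g : Lp ℝ 1 unitMeasure} (hg : 0 ≤ g) :
      Φ g = ‖S‖ * ‖g‖ - (S g t + 1 / 32 * concentrationOperator g t) := by
    rw [norm_eq_integral_of_nonneg hg, ← L1.integral_eq_integral, L1.integral_eq]
    rfl
  have hindex : ∀ᵐ x ∂unitMeasure, dyadicIndex l x ∈ Finset.range (2 ^ l + 1) := by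
    filter_upwards [ae_restrict_mem measurableSet_Icc] with x hx
    exact Finset.mem_range_succ_iff.2 (dyadicIndex_le_of_mem_Icc l hx)
  rw [← sub_nonneg, ← hΦ hf, ← sum_cutoff_preimage_singleton (measurable_dyadicIndex l) hindex f,
    map_sum]
  refine Finset.sum_nonneg fun i _ => ?_
  rw [hΦ (cutoff_nonneg _ hf), sub_nonneg]
  refine apply_add_le_of_mem_dyadicCell hS ht ht1 (le_max_right _ _) hbudget (i := i)
    (cutoff_nonneg _ hf) ?_
  filter_upwards [coeFn_cutoff (measurable_dyadicIndex l (measurableSet_singleton i)) f] with x hx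
  rw [hx]
  exact Set.mem_of_indicator_ne_zero

theorem dense_setOf_eq_div_two_pow_lt_one :
    Dense {t : Set.Icc (0 : ℝ) 1 | (t : ℝ) < 1 ∧ ∃ n k : ℕ, (t : ℝ) = n / 2 ^ k} := by
  refine Metric.dense_iff.2 fun t ε hε => ?_
  obtain ⟨k, hk⟩ := exists_pow_lt_of_lt_one hε one_half_lt_one
  have hpow : (0 : ℝ) < 2 ^ k := by positivity
  obtain ⟨n, hn, hnt, htn⟩ : ∃ n : ℕ, n < 2 ^ k ∧
      (n : ℝ) ≤ 2 ^ k * (t : ℝ) ∧ 2 ^ k * (t : ℝ) ≤ n + 1 := by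
    have ht := t.2
    rcases ht.2.eq_or_lt with h1 | h1
    · refine ⟨2 ^ k - 1, Nat.sub_lt (by positivity) one_pos, ?_⟩
      rw [h1, Nat.cast_pred (by positivity)]
      constructor <;> simp
    · refine ⟨⌊2 ^ k * (t : ℝ)⌋₊, ?_, Nat.floor_le (mul_nonneg hpow.le ht.1),
        (Nat.lt_floor_add_one _).le⟩
      rw [Nat.floor_lt (mul_nonneg hpow.le ht.1)]
      push_cast
      exact mul_lt_of_lt_one_right hpow h1
  have hlt : (n : ℝ) / 2 ^ k < 1 := by
    rw [div_lt_one hpow]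
    exact_mod_cast hn
  refine ⟨⟨n / 2 ^ k, by positivity, hlt.le⟩, ?_, hlt, n, k, rfl⟩
  rw [Metric.mem_ball, dist_comm, Subtype.dist_eq, Real.dist_eq, abs_of_nonneg (by
    rw [sub_nonneg, div_le_iff₀' hpow]; exact hnt)]
  refine lt_of_le_of_lt ?_ hk
  rw [one_div_pow, sub_le_iff_le_add, ← add_div, le_div_iff₀' hpow]
  linarith

theorem apply_add_le_of_nonneg (hS : ‖S - deficitOperator‖ ≤ 1 / 16) (hf : 0 ≤ f)
    (t : Set.Icc (0 : ℝ) 1) : S f t + 1 / 32 * concentrationOperator f t ≤ ‖S‖ * ‖f‖ := by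
  have hclosed : IsClosed
      {t : Set.Icc (0 : ℝ) 1 | S f t + 1 / 32 * concentrationOperator f t ≤ ‖S‖ * ‖f‖} :=
    isClosed_le (by fun_prop) continuous_const
  refine hclosed.closure_subset_iff.2 ?_ (dense_setOf_eq_div_two_pow_lt_one t)
  rintro s ⟨hs1, n, k, hs⟩
  exact apply_add_le_of_eq_div hS hs hs1 hf

theorem apply_lt_opNorm_mul_norm (hS : ‖S - deficitOperator‖ ≤ 1 / 16) (hf : f ≠ 0)
    (t : Set.Icc (0 : ℝ) 1) : S f t < ‖S‖ * ‖f‖ := by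
  have hsplit : S f t = S f⁺ t - S f⁻ t := by
    rw [← ContinuousMap.sub_apply, ← map_sub, posPart_sub_negPart]
  have hnorm : ‖f‖ = ‖f⁺‖ + ‖f⁻‖ := by
    rw [← norm_abs_eq_norm, ← posPart_add_negPart,
      norm_add_of_nonneg (posPart_nonneg f) (negPart_nonneg f)]
  have hpos := apply_add_le_of_nonneg hS (posPart_nonneg f) t
  have hneg : -S f⁻ t ≤ 1 / 16 * ‖f⁻‖ := by
    have hnear := (abs_le.1 (abs_apply_sub_deficitOperator_le hS f⁻ t)).1
    rw [deficitOperator_apply_of_nonneg (negPart_nonneg f)] at hnear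
    linarith [concentrationOperator_le_norm f⁻ t]
  have hM := eleven_sixteenths_le_opNorm hS
  rw [hsplit, hnorm, mul_add]
  rcases eq_or_ne f⁺ 0 with hzero | hne
  · have hf' : 0 < ‖f⁻‖ := by
      rw [← norm_pos_iff, hnorm, hzero, norm_zero, zero_add] at hf
      exact hf
    rw [hzero] at hpos ⊢
    simp only [map_zero, ContinuousMap.zero_apply, norm_zero] at hpos ⊢
    nlinarith
  · nlinarith [concentrationOperator_pos (posPart_nonneg f) hne t, norm_nonneg f⁻]

theorem not_normAttaining_of_norm_sub_deficitOperator_le (hS : ‖S - deficitOperator‖ ≤ 1 / 16) :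
    ¬ NormAttaining S := by
  rintro ⟨f, hf, hSf⟩
  have hf0 : f ≠ 0 := norm_ne_zero_iff.1 (hf.trans_ne one_ne_zero)
  obtain ⟨t, ht⟩ := exists_abs_apply_eq_norm (S f)
  have hlt := apply_lt_opNorm_mul_norm hS hf0 t
  have hlt' := apply_lt_opNorm_mul_norm hS (neg_ne_zero.2 hf0) t
  rw [map_neg, ContinuousMap.neg_apply, norm_neg] at hlt'
  rw [hf, mul_one] at hlt hlt'
  exact (abs_lt.2 ⟨neg_lt.1 hlt', hlt⟩).ne (ht.trans hSf)

theorem not_dense_normAttaining_L1_continuousMap :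
    ¬ Dense {T : Lp ℝ 1 unitMeasure →L[ℝ] C(Set.Icc (0 : ℝ) 1, ℝ) | NormAttaining T} := fun h => by
  obtain ⟨S, hS, hNA⟩ := Metric.dense_iff.1 h deficitOperator (1 / 16) (by norm_num)
  refine not_normAttaining_of_norm_sub_deficitOperator_le ?_ hNA
  exact ((dist_eq_norm S deficitOperator).symm.trans_lt hS).le

instance : Nontrivial (Lp ℝ 1 unitMeasure) :=
  ⟨Lp.const 1 unitMeasure 1, 0, norm_ne_zero_iff.1 (by simp [Lp.norm_const])⟩

end Perturbation

theorem normAttaining_not_dense_C01_L101_general {G H : Type*} [NormedAddCommGroup G]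
    [NormedSpace ℝ G] [NormedAddCommGroup H] [NormedSpace ℝ H] :
    ¬ Dense {T : WithLp 1 (G × Lp ℝ 1 ((volume : Measure ℝ).restrict (Set.Icc (0 : ℝ) 1))) →L[ℝ]
      WithLp 1 (C(Set.Icc (0 : ℝ) 1, ℝ) × H) | NormAttaining T} :=
  not_dense_normAttaining_l1Sum not_dense_normAttaining_L1_continuousMap

/-- For `X = C[0,1] ⊕₁ L₁[0,1]`, the set of norm-attaining operators `NA(X, X)` is not dense
in `L(X, X)`. -/
theorem normAttaining_not_dense_C01_L101 :
    ¬ Dense {T : XCL →L[ℝ] XCL | NormAttaining T} := by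
  exact normAttaining_not_dense_C01_L101_general
end
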